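/- Let d ≥ 1, p ≥ 2, s ∈ (0,1), and let 1 ≤ k ≤ d be an integer. Assume α, β ∈ ℝ satisfy α, β, α+β ∈ (−k, sp). Then for every u ∈ C_c^1(ℝ^d) when sp < k+α+β, and for every u ∈ C_c^1(ℝ^d \ K) when sp > k+α+β, setting v(x) := |x_k|^{(k+α+β−sp)/p} u(x), one has: ∫_{ℝ^d} ∫_{ℝ^d} |u(x)−u(y)|^p |x−y|^{−d−sp} |x_k|^α |y_k|^β dx dy − 𝒞(d,s,p,k,α,β) ∫_{ℝ^d} |u(x)|^p |x_k|^{α+β−sp} dx ≥ c_p ∫_{ℝ^d} ∫_{ℝ^d} |v(x)−v(y)|^p |x−y|^{−d−sp} |x_k|^{−(k−α+β−sp)/2} |y_k|^{−(k+α−β−sp)/2} dx dy, where c_p := inf_{0<τ<1/2} ((1−τ)^p − τ^p + p τ^{p−1}). -/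

import Mathlib

/-!
Write `σ = s p`, `γ = (k + α + β - σ) / p`, `d = k + m`. The proof is the ground state substitution
`u = |x_k|^(-γ) v`, carried out with nonnegative (lower Lebesgue) integrals.

**Pointwise inequality** (`key_main`). For `p ≥ 2`, `0 ≤ t ≤ 1` and real `a`,
`|a - t|^p ≥ (1 - t)^(p-1) (|a|^p - t) + c_p t^(p/2) |a - 1|^p`.
If `t ≤ a²` or `t ≤ a ≤ 1` this is a convexity estimate. Otherwise put `a = 1 - δ`, `t = 1 - τ δ`:
the difference of both sides divided by `δ^p` is continuous on a compact region, nonnegative on its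
boundary (for `δ = 0` this is the definition of `c_p`), and the first-order conditions exclude an
interior minimum with negative value (`hfun_interior`).

**Integration.** Insert `t = w(y) / w(x)` and `a = v(x) / v(y)`, with `w = |x_k|^(-γ)`, for pairs with
`w(y) ≤ w(x)`, and multiply by the symmetrized weighted kernel. The last term integrates to the
remainder energy of `v`. The terms containing only `u x` or only `u y` are integrated over the other
variable: integration along the flat is done by Gamma subordination (`lintegral_flat`), over
spheres it produces `Psi` (`ker_radial`), and homogeneity turns the outcome into a multiple of the
Hardy density. The two multiples differ by exactly the sharp constant (`w_identity`).

Each multiple may be infinite on its own, because of the singularity of the kernel at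
`|x_k| = |y_k|`. Hence the ratio `r = |y_k| / |x_k|` is first confined to sets on which the smaller one
is finite (`trunc_ineq`); monotone convergence then gives the full inequality (`lintegral_ineq`). The
admissible ratios are those with `r^γ > 1`, that is `(0, 1)` or `(1, ∞)` according to the sign of `γ`;
the inversion `r ↦ 1 / r` shows that both yield the same constant (`CS_inv`).

**Return to Bochner integrals.** The weighted energy of `u` and the Hardy integral are finite
(`gagl_int`, `hardy_int`), and the remainder energy is then finite as well by the inequality itself
unless `c_p = 0`, so no Bochner integral takes a junk value that matters.
-/

open MeasureTheory Real Set Filter Topology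

noncomputable section

/-- Surface measure `|𝕊^m|` of the unit sphere `𝕊^m ⊆ ℝ^(m+1)`. -/
def sphereVol (m : ℕ) : ℝ :=
  2 * Real.pi ^ (((m : ℝ) + 1) / 2) / Real.Gamma (((m : ℝ) + 1) / 2)

/-- The profile function `Φ_{d,s,p}(r)`. -/
def Phi (d : ℕ) (s p r : ℝ) : ℝ :=
  if d = 1 then (1 - r) ^ (-1 - s * p) + (1 + r) ^ (-1 - s * p)
  else sphereVol (d - 2) *
    ∫ t in Icc (-1 : ℝ) 1,
      (1 - t ^ 2) ^ (((d : ℝ) - 3) / 2) * (1 - 2 * t * r + r ^ 2) ^ (-(((d : ℝ) + s * p) / 2))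

/-- The sharp constant `𝒞₁(d,s,p,α,β)` for the weighted fractional Hardy inequality with
point singularity. -/
def C1 (d : ℕ) (s p a b : ℝ) : ℝ :=
  ∫ r in Ioo (0 : ℝ) 1,
    r ^ (s * p - 1) * (r ^ (-a) + r ^ (-b)) *
      |1 - r ^ (((d : ℝ) + a + b - s * p) / p)| ^ p * Phi d s p r

/-- The sharp constant `𝒞(d,s,p,k,α,β)` for the weighted fractional Hardy inequality with
singularity on a flat submanifold of codimension `k`. -/
def CC (d k : ℕ) (s p a b : ℝ) : ℝ :=
  Real.pi ^ (((d : ℝ) - (k : ℝ)) / 2) * Real.Gamma (((k : ℝ) + s * p) / 2) /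
    Real.Gamma (((d : ℝ) + s * p) / 2) * C1 k s p a b

/-- `|x_k|`: the Euclidean norm of the vector of the first `k` coordinates of `x ∈ ℝ^d`. -/
def pnorm (d k : ℕ) (x : EuclideanSpace ℝ (Fin d)) : ℝ :=
  Real.sqrt (∑ i : Fin d, if (i : ℕ) < k then x i ^ 2 else 0)

/-- The constant `c_p = inf_{0<τ<1/2} ((1-τ)^p - τ^p + p τ^{p-1})`. -/
def cRem (p : ℝ) : ℝ :=
  sInf ((fun τ : ℝ => (1 - τ) ^ p - τ ^ p + p * τ ^ (p - 1)) '' Ioo (0 : ℝ) (1 / 2))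

/-! ### The pointwise inequality -/

lemma cRem_term_nonneg {p τ : ℝ} (hp : 2 ≤ p) (hτ : τ ∈ Ioo (0 : ℝ) (1 / 2)) :
    0 ≤ (1 - τ) ^ p - τ ^ p + p * τ ^ (p - 1) := by
  have h1 : τ ^ p ≤ (1 - τ) ^ p :=
    rpow_le_rpow hτ.1.le (by linarith [hτ.2]) (by linarith)
  have h2 : 0 ≤ p * τ ^ (p - 1) := mul_nonneg (by linarith) (rpow_nonneg hτ.1.le _)
  linarith

lemma cRem_nonneg {p : ℝ} (hp : 2 ≤ p) : 0 ≤ cRem p := by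
  apply Real.sInf_nonneg
  rintro _ ⟨τ, hτ, rfl⟩
  exact cRem_term_nonneg hp hτ

lemma cRem_le_Ioo {p τ : ℝ} (hp : 2 ≤ p) (hτ : τ ∈ Ioo (0 : ℝ) (1 / 2)) :
    cRem p ≤ (1 - τ) ^ p - τ ^ p + p * τ ^ (p - 1) := by
  apply csInf_le
  · refine ⟨0, ?_⟩
    rintro _ ⟨τ, hτ, rfl⟩
    exact cRem_term_nonneg hp hτ
  · exact ⟨τ, hτ, rfl⟩

lemma cRem_le_Icc_half {p τ : ℝ} (hp : 2 ≤ p) (hτ : τ ∈ Icc (0 : ℝ) (1 / 2)) :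
    cRem p ≤ (1 - τ) ^ p - τ ^ p + p * τ ^ (p - 1) := by
  have hcl : τ ∈ closure (Ioo (0 : ℝ) (1 / 2)) := by
    rw [closure_Ioo (by norm_num)]; exact hτ
  have hcont : Continuous fun τ : ℝ => (1 - τ) ^ p - τ ^ p + p * τ ^ (p - 1) := by
    refine ((Continuous.rpow_const (by fun_prop) fun _ => Or.inr (by linarith)).sub
      (Continuous.rpow_const (by fun_prop) fun _ => Or.inr (by linarith))).add
      (continuous_const.mul (Continuous.rpow_const (by fun_prop) fun _ => Or.inr (by linarith)))
  exact closure_minimal (s := Ioo (0 : ℝ) (1 / 2))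
    (t := {τ | cRem p ≤ (1 - τ) ^ p - τ ^ p + p * τ ^ (p - 1)})
    (fun x hx => cRem_le_Ioo hp hx) (isClosed_le continuous_const hcont) hcl

lemma cRem_le_one {p : ℝ} (hp : 2 ≤ p) : cRem p ≤ 1 := by
  have := cRem_le_Icc_half hp (τ := 0) ⟨le_rfl, by norm_num⟩
  rwa [sub_zero, one_rpow, zero_rpow (by linarith), zero_rpow (by linarith), sub_zero, mul_zero,
    add_zero] at this

/-- With `a = exp (-x)` this is `sinh ((p - 2) x / 2) / (p - 2) ≤ sinh (p x / 2) / p`, i.e. the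
monotonicity of `m ↦ sinh (m x) / m`. It excludes negative critical values in `hfun_interior`. -/
lemma sinh_type_ineq {p a : ℝ} (hp : 2 ≤ p) (ha : a ∈ Icc (0 : ℝ) 1) :
    p * (a - a ^ (p - 1)) ≤ (p - 2) * (1 - a ^ p) := by
  have hcont : ContinuousOn (fun a : ℝ => (p - 2) * (1 - a ^ p) - p * (a - a ^ (p - 1)))
      (Icc 0 1) := by
    refine Continuous.continuousOn ?_
    refine (continuous_const.mul (continuous_const.sub
      (Continuous.rpow_const (by fun_prop) fun _ => Or.inr (by linarith)))).sub
      (continuous_const.mul (continuous_id.sub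
      (Continuous.rpow_const (by fun_prop) fun _ => Or.inr (by linarith))))
  have hd : ∀ x ∈ Ioo (0 : ℝ) 1,
      HasDerivAt (fun a : ℝ => (p - 2) * (1 - a ^ p) - p * (a - a ^ (p - 1)))
        ((p - 2) * (0 - p * x ^ (p - 1)) - p * (1 - (p - 1) * x ^ (p - 1 - 1))) x := by
    intro x hx
    exact (((hasDerivAt_const x (1 : ℝ)).sub (hasDerivAt_rpow_const (Or.inl hx.1.ne'))).const_mul
      (p - 2)).sub (((hasDerivAt_id x).sub (hasDerivAt_rpow_const (Or.inl hx.1.ne'))).const_mul p)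
  have hanti : AntitoneOn (fun a : ℝ => (p - 2) * (1 - a ^ p) - p * (a - a ^ (p - 1)))
      (Icc 0 1) := by
    apply antitoneOn_of_deriv_nonpos (convex_Icc 0 1) hcont
    · intro x hx
      rw [interior_Icc] at hx
      exact (hd x hx).differentiableAt.differentiableWithinAt
    · intro x hx
      rw [interior_Icc] at hx
      rw [(hd x hx).deriv]
      have h := Real.geom_mean_le_arith_mean2_weighted (w₁ := (p - 2) / (p - 1))
        (w₂ := 1 / (p - 1)) (p₁ := x ^ (p - 1)) (p₂ := 1)
        (div_nonneg (by linarith) (by linarith)) (div_nonneg (by norm_num) (by linarith))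
        (rpow_nonneg hx.1.le _) zero_le_one (by
          have : p - 1 ≠ 0 := by linarith
          field_simp; ring)
      rw [one_rpow, mul_one, ← rpow_mul hx.1.le] at h
      have h1 : (p - 1) * ((p - 2) / (p - 1)) = p - 1 - 1 := by
        have : p - 1 ≠ 0 := by linarith
        field_simp; ring
      rw [h1] at h
      have h2 : (p - 1) * x ^ (p - 1 - 1) ≤ (p - 2) * x ^ (p - 1) + 1 := by
        have := mul_le_mul_of_nonneg_left h (by linarith : (0 : ℝ) ≤ p - 1)
        have h3 : (p - 1) * ((p - 2) / (p - 1) * x ^ (p - 1) + 1 / (p - 1) * 1)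
          = (p - 2) * x ^ (p - 1) + 1 := by
          have : p - 1 ≠ 0 := by linarith
          field_simp
        linarith
      nlinarith
  have := hanti ha (right_mem_Icc.2 zero_le_one) ha.2
  simp only [one_rpow] at this
  linarith

/-- The bound defining the infimum `cRem p` extends from `(0, 1/2)` to `[0, 1]`: for `τ ≥ 1/2` the
value at `τ` dominates the value at `1 - τ`. -/
lemma cRem_le {p τ : ℝ} (hp : 2 ≤ p) (hτ : τ ∈ Icc (0 : ℝ) 1) :
    cRem p ≤ (1 - τ) ^ p - τ ^ p + p * τ ^ (p - 1) := by
  rcases le_total τ (1 / 2) with h | h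
  · exact cRem_le_Icc_half hp ⟨hτ.1, h⟩
  · have h0 := cRem_le_Icc_half hp (τ := 1 - τ) ⟨by linarith [hτ.2], by linarith⟩
    rw [sub_sub_cancel] at h0
    refine h0.trans ?_
    have hτ0 : 0 < τ := by linarith
    -- reduce to the one-variable inequality for the ratio `(1 - τ) / τ ≤ 1`
    set r := (1 - τ) / τ with hr
    have hr0 : 0 ≤ r := div_nonneg (by linarith [hτ.2]) hτ0.le
    have hr1 : r ≤ 1 := by rw [hr, div_le_one hτ0]; linarith
    have e1 : 1 - τ = τ * r := by rw [hr]; field_simp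
    have e2 : τ * (1 + r) = 1 := by linarith
    rw [e1, mul_rpow hτ0.le hr0, mul_rpow hτ0.le hr0]
    have e3 : τ ^ p = τ ^ (p - 1) * τ := by
      rw [← rpow_add_one hτ0.ne']; ring_nf
    have h1 : r ^ (p - 1) ≤ r := by
      rcases hr0.eq_or_lt with h | h
      · rw [← h, zero_rpow (by linarith)]
      · calc r ^ (p - 1) ≤ r ^ (1 : ℝ) := rpow_le_rpow_of_exponent_ge h hr1 (by linarith)
          _ = r := rpow_one r
    have h2 : r ^ p ≤ 1 := rpow_le_one hr0 hr1 (by linarith)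
    have e4 : r ^ p = r ^ (p - 1) * r := by
      rcases hr0.eq_or_lt with h | h
      · rw [← h, zero_rpow (by linarith), mul_zero]
      · rw [← rpow_add_one h.ne']; ring_nf
    have hT : 0 ≤ τ ^ (p - 1) := rpow_nonneg hτ0.le _
    set T := τ ^ (p - 1)
    set q := r ^ (p - 1)
    rw [e3]
    have key : 0 ≤ τ * ((p - 2) * (1 - r ^ p) + p * (r - q)) :=
      mul_nonneg hτ0.le (add_nonneg (mul_nonneg (by linarith) (by linarith))
        (mul_nonneg (by linarith) (by linarith)))
    have : 0 ≤ T * (2 * τ * (r ^ p - 1) + p * (1 - q)) := by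
      refine mul_nonneg hT ?_
      have : 2 * τ * (r ^ p - 1) + p * (1 - q)
        = 2 * τ * (r ^ p - 1) + p * (τ * (1 + r)) * (1 - q) := by rw [e2]; ring
      rw [this]
      calc 0 ≤ τ * ((p - 2) * (1 - r ^ p) + p * (r - q)) := key
        _ = _ := by rw [e4]; ring
    linarith

lemma rpow_split {x p : ℝ} (hx : 0 ≤ x) (hp : 1 < p) : x ^ p = x * x ^ (p - 1) := by
  rcases hx.eq_or_lt with h | h
  · rw [← h, zero_rpow (by linarith), zero_mul]
  · nth_rewrite 2 [← rpow_one x]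
    rw [← rpow_add h]; ring_nf

/-- Convexity: Jensen's inequality for the weights `1 - t`, `t` and the points `l`, `1`. -/
lemma jensen_one {q l t : ℝ} (hq : 1 ≤ q) (hl : 0 ≤ l) (ht : t ∈ Icc (0 : ℝ) 1) :
    ((1 - t) * l + t) ^ q ≤ (1 - t) * l ^ q + t := by
  have := (convexOn_rpow hq).2 (mem_Ici.2 hl) (mem_Ici.2 zero_le_one)
    (by linarith [ht.2] : (0 : ℝ) ≤ 1 - t) ht.1 (by ring)
  simpa [one_rpow] using this

/-- The pointwise inequality without remainder, for `B ≥ t`: a rescaled form of `jensen_one`. -/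
lemma first_ineq {m t B : ℝ} (hm : 1 ≤ m) (ht : t ∈ Icc (0 : ℝ) 1) (hB : t ≤ B) :
    (1 - t) ^ (m - 1) * (B ^ m - t) ≤ (B - t) ^ m := by
  rcases hm.eq_or_lt with h1 | h1
  · subst h1; simp
  rcases ht.2.eq_or_lt with h | h
  · rw [h, sub_self, zero_rpow (by linarith), zero_mul]
    exact rpow_nonneg (by linarith) _
  have h0 : 0 < 1 - t := by linarith
  set l := (B - t) / (1 - t) with hl
  have hl0 : 0 ≤ l := div_nonneg (by linarith) h0.le
  have e : B - t = (1 - t) * l := by rw [hl]; field_simp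
  have e2 : B = (1 - t) * l + t := by linarith
  have := jensen_one hm hl0 ht
  rw [← e2] at this
  rw [e, mul_rpow h0.le hl0, rpow_split h0.le h1, mul_comm (1 - t), mul_assoc]
  exact mul_le_mul_of_nonneg_left (by linarith) (rpow_nonneg h0.le _)

/-- The pointwise inequality for `t ≤ a ≤ 1`, with the coefficient `t` of the remainder. With
`a = (1 - t) l + t` it follows from Jensen's inequality for `a ^ (p - 1)`. -/
lemma key_cov {p t a : ℝ} (hp : 2 ≤ p) (ht : t ∈ Icc (0 : ℝ) 1) (hta : t ≤ a) (ha : a ≤ 1) :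
    t * (1 - a) ^ p + (1 - t) ^ (p - 1) * (a ^ p - t) ≤ (a - t) ^ p := by
  rcases ht.2.eq_or_lt with h | h
  · have : a = 1 := by linarith
    rw [h, this, sub_self, zero_rpow (by linarith), zero_rpow (by linarith)]; simp
  have h0 : 0 < 1 - t := by linarith
  set l := (a - t) / (1 - t) with hl
  have hl0 : 0 ≤ l := div_nonneg (by linarith) h0.le
  have hl1 : l ≤ 1 := by rw [hl, div_le_one h0]; linarith
  have e : a - t = (1 - t) * l := by rw [hl]; field_simp
  have e2 : a = (1 - t) * l + t := by linarith
  have e3 : 1 - a = (1 - t) * (1 - l) := by linarith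
  have ha0 : 0 ≤ a := ht.1.trans hta
  have j := jensen_one (q := p - 1) (by linarith) hl0 ht
  rw [← e2] at j
  have h1 : a ^ p ≤ a * ((1 - t) * l ^ (p - 1) + t) := by
    rw [rpow_split ha0 (by linarith)]
    exact mul_le_mul_of_nonneg_left j ha0
  have h2 : (1 - l) ^ (p - 1) ≤ 1 - l ^ (p - 1) := by
    have a1 : (1 - l) ^ (p - 1) ≤ (1 - l) := by
      rcases (by linarith : 0 ≤ 1 - l).eq_or_lt with h | h
      · rw [← h, zero_rpow (by linarith)]
      · calc (1 - l) ^ (p - 1) ≤ (1 - l) ^ (1 : ℝ) :=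
            rpow_le_rpow_of_exponent_ge h (by linarith) (by linarith)
          _ = _ := rpow_one _
    have a2 : l ^ (p - 1) ≤ l := by
      rcases hl0.eq_or_lt with h | h
      · rw [← h, zero_rpow (by linarith)]
      · calc l ^ (p - 1) ≤ l ^ (1 : ℝ) :=
            rpow_le_rpow_of_exponent_ge h (by linarith) (by linarith)
          _ = _ := rpow_one _
    linarith
  have h3 : (1 - l) ^ p ≤ (1 - l) * (1 - l ^ (p - 1)) := by
    rw [rpow_split (by linarith) (by linarith : 1 < p)]
    exact mul_le_mul_of_nonneg_left h2 (by linarith)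
  rw [e3, e, mul_rpow h0.le (by linarith), mul_rpow h0.le hl0, rpow_split h0.le (by linarith)]
  have hT : 0 ≤ (1 - t) ^ (p - 1) := rpow_nonneg h0.le _
  set T := (1 - t) ^ (p - 1)
  have h4 : l ^ p = l * l ^ (p - 1) := rpow_split hl0 (by linarith)
  have h5 : t * (1 - t) * (1 - l) ^ p + (a ^ p - t) ≤ (1 - t) * l ^ p := by
    have := mul_le_mul_of_nonneg_left h3 (mul_nonneg ht.1 h0.le)
    rw [h4]
    have h6 : a * ((1 - t) * l ^ (p - 1) + t) =
        ((1 - t) * l + t) * ((1 - t) * l ^ (p - 1) + t) := by rw [← e2]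
    nlinarith
  nlinarith

/-- For `t ≤ a²` the identity `(a - t)² = (1 - t)(a² - t) + t (a - 1)²` reduces the claim to
superadditivity of `x ↦ x ^ (p / 2)`. -/
lemma key_sq {p t a : ℝ} (hp : 2 ≤ p) (ht : t ∈ Icc (0 : ℝ) 1) (hta : t ≤ a ^ 2) :
    t ^ (p / 2) * |a - 1| ^ p + (1 - t) ^ (p - 1) * (|a| ^ p - t) ≤ |a - t| ^ p := by
  have hm : 1 ≤ p / 2 := by linarith
  have sq (x : ℝ) : |x| ^ p = (x ^ 2) ^ (p / 2) := by
    rw [← sq_abs, ← rpow_natCast, ← rpow_mul (abs_nonneg _)]; congr 1; push_cast; ring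
  have h0 : 0 ≤ 1 - t := by linarith [ht.2]
  rw [sq, sq, sq]
  have e : (a - t) ^ 2 = (1 - t) * (a ^ 2 - t) + t * (a - 1) ^ 2 := by ring
  have h1 := add_rpow_le_rpow_add (p := p / 2) (mul_nonneg h0 (sub_nonneg.2 hta))
    (mul_nonneg ht.1 (sq_nonneg (a - 1))) hm
  rw [← e, mul_rpow h0 (sub_nonneg.2 hta), mul_rpow ht.1 (sq_nonneg _)] at h1
  have h2 := first_ineq hm ht hta
  have h3 : (1 - t) ^ (p - 1) = (1 - t) ^ (p / 2) * (1 - t) ^ (p / 2 - 1) := by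
    rcases h0.eq_or_lt with h | h
    · rw [← h, zero_rpow (by linarith), zero_rpow (by linarith : p / 2 ≠ 0), zero_mul]
    · rw [← rpow_add h]; ring_nf
  have h4 := mul_le_mul_of_nonneg_left h2 (rpow_nonneg h0 (p / 2))
  rw [h3]
  linarith

/-- With `φ = |a| ^ (p - 2) * a` this is the quantity which the first-order conditions at an
interior critical point of `hfun` with a negative value would force to be negative. -/
lemma crit_nonneg {p a : ℝ} (hp : 2 ≤ p) (ha : |a| < 1) :
    0 ≤ (p - 2) - p * a + p * (|a| ^ (p - 2) * a) - (p - 2) * (a * (|a| ^ (p - 2) * a)) := by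
  have hs := sinh_type_ineq hp (a := |a|) ⟨abs_nonneg _, ha.le⟩
  have e0 : a * (|a| ^ (p - 2) * a) = |a| ^ p := by
    calc a * (|a| ^ (p - 2) * a) = |a| ^ (p - 2) * |a| ^ 2 := by rw [sq_abs]; ring
      _ = |a| ^ p := by
        rw [← rpow_natCast |a| 2, ← rpow_add' (abs_nonneg _) (by push_cast; linarith)]
        congr 1; push_cast; ring
  have e1 : |a| ^ (p - 2) * |a| = |a| ^ (p - 1) := by
    nth_rewrite 2 [← rpow_one |a|]
    rw [← rpow_add' (abs_nonneg _) (by linarith)]; congr 1; ring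
  rw [e0]
  rcases le_total 0 a with h | h
  · rw [abs_of_nonneg h] at *
    rw [e1]; nlinarith
  · have h1 : |a| ^ (p - 1) ≤ |a| := by
      rcases (abs_nonneg a).eq_or_lt with h | h
      · rw [← h, zero_rpow (by linarith)]
      · calc |a| ^ (p - 1) ≤ |a| ^ (1 : ℝ) :=
            rpow_le_rpow_of_exponent_ge h ha.le (by linarith)
          _ = _ := rpow_one _
    have h2 : |a| ^ p ≤ 1 := rpow_le_one (abs_nonneg _) ha.le (by linarith)
    have h3 : |a| ^ (p - 2) * a = - |a| ^ (p - 1) := by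
      rw [← e1, abs_of_nonpos h]; ring
    rw [h3]
    have h4 : a = - |a| := by rw [abs_of_nonpos h]; ring
    have h5 : p * a = - (p * |a|) := by rw [h4]; simp
    nlinarith [mul_nonneg (by linarith : (0:ℝ) ≤ p - 2) (sub_nonneg.2 h2),
      mul_nonneg (by linarith : (0:ℝ) ≤ p) (sub_nonneg.2 h1)]

/-- The numerator `1 - |1 - δ| ^ p` of the difference quotient used below. -/
def qnum (p δ : ℝ) : ℝ := 1 - |1 - δ| ^ p

lemma qnum_hasDerivAt {p : ℝ} (hp : 2 ≤ p) (δ : ℝ) :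
    HasDerivAt (qnum p) (p * (|1 - δ| ^ (p - 2) * (1 - δ))) δ := by
  have h := (hasDerivAt_abs_rpow (1 - δ) (by linarith : 1 < p)).comp δ
    ((hasDerivAt_const δ (1 : ℝ)).sub (hasDerivAt_id δ))
  exact ((hasDerivAt_const δ (1 : ℝ)).sub h).congr_deriv (by ring)

/-- The function `h(τ, δ)`, i.e. the difference of both sides of the pointwise inequality at
`a = 1 - δ`, `t = 1 - τ δ`, divided by `|a - 1| ^ p = δ ^ p`; see `hfun_eq`. The divided difference
`dslope` extends it continuously to `δ = 0`, where it becomes the expression defining `cRem`. -/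
def hfun (p : ℝ) (z : ℝ × ℝ) : ℝ :=
  (1 - z.1) ^ p - z.1 ^ p + z.1 ^ (p - 1) * dslope (qnum p) 0 z.2
    - cRem p * (1 - z.1 * z.2) ^ (p / 2)

lemma dslope_qnum_zero {p : ℝ} (hp : 2 ≤ p) : dslope (qnum p) 0 0 = p := by
  rw [dslope_same, (qnum_hasDerivAt hp 0).deriv]; simp

lemma dslope_qnum {p δ : ℝ} (hδ : δ ≠ 0) :
    dslope (qnum p) 0 δ = (1 - |1 - δ| ^ p) / δ := by
  rw [dslope_of_ne _ hδ, slope_def_field]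
  simp [qnum]

lemma hfun_continuous {p : ℝ} (hp : 2 ≤ p) : Continuous (hfun p) := by
  have h1 : Continuous (dslope (qnum p) 0) := by
    rw [← continuousOn_univ, continuousOn_dslope univ_mem]
    refine ⟨fun x _ => (qnum_hasDerivAt hp x).continuousAt.continuousWithinAt,
      (qnum_hasDerivAt hp 0).differentiableAt⟩
  unfold hfun
  refine (((Continuous.rpow_const (by fun_prop) fun _ => Or.inr (by linarith)).sub
      (Continuous.rpow_const (by fun_prop) fun _ => Or.inr (by linarith))).add
      ((Continuous.rpow_const (by fun_prop) fun _ => Or.inr (by linarith)).mul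
        (h1.comp continuous_snd))).sub
      (continuous_const.mul (Continuous.rpow_const (by fun_prop) fun _ => Or.inr (by linarith)))

lemma hfun_eq {p τ δ : ℝ} (hp : 2 ≤ p) (hτ : 0 ≤ τ) (hτ1 : τ ≤ 1) (hδ : 0 < δ) :
    δ ^ p * hfun p (τ, δ) = |(1 - δ) - (1 - τ * δ)| ^ p
      - (1 - (1 - τ * δ)) ^ (p - 1) * (|1 - δ| ^ p - (1 - τ * δ))
      - cRem p * (1 - τ * δ) ^ (p / 2) * |(1 - δ) - 1| ^ p := by
  have e1 : |(1 - δ) - (1 - τ * δ)| = δ * (1 - τ) := by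
    rw [show (1 - δ) - (1 - τ * δ) = - (δ * (1 - τ)) by ring, abs_neg,
      abs_of_nonneg (mul_nonneg hδ.le (by linarith))]
  have e2 : |(1 - δ) - 1| = δ := by
    rw [show 1 - δ - 1 = - δ by ring, abs_neg, abs_of_pos hδ]
  rw [e1, e2, show 1 - (1 - τ * δ) = δ * τ by ring, mul_rpow hδ.le (by linarith),
    mul_rpow hδ.le hτ, hfun, dslope_qnum hδ.ne']
  simp only
  rw [rpow_split hδ.le (by linarith : 1 < p), rpow_split hτ (by linarith : 1 < p)]
  field_simp
  ring

/-- A local minimum of `hfun` in the interior of the region `0 ≤ τ ≤ 1`, `0 ≤ δ ≤ 2 - τ` has a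
nonnegative value. -/
lemma hfun_interior {p τ δ : ℝ} (hp : 2 ≤ p) (hτ : 0 < τ) (hτ1 : τ < 1) (hδ : 0 < δ)
    (hδ2 : δ < 2 - τ) (hmin : IsLocalMin (hfun p) (τ, δ)) : 0 ≤ hfun p (τ, δ) := by
  by_contra! hneg
  have htpos : 0 < 1 - τ * δ := by nlinarith [sq_nonneg (1 - τ)]
  have hq : HasDerivAt (dslope (qnum p) 0)
      ((p * (|1 - δ| ^ (p - 2) * (1 - δ)) * δ - (1 - |1 - δ| ^ p)) / δ ^ 2) δ := by
    have := (qnum_hasDerivAt hp δ).div (hasDerivAt_id δ) hδ.ne'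
    refine (this.congr_of_eventuallyEq ?_).congr_deriv (by simp [qnum])
    filter_upwards [eventually_ne_nhds hδ.ne'] with x hx
    rw [dslope_qnum hx]; rfl
  -- both partial derivatives vanish
  have d1 : HasDerivAt (fun x => hfun p (τ, x))
      (τ ^ (p - 1) * ((p * (|1 - δ| ^ (p - 2) * (1 - δ)) * δ - (1 - |1 - δ| ^ p)) / δ ^ 2)
        - cRem p * (-τ * (p / 2) * (1 - τ * δ) ^ (p / 2 - 1))) δ := by
    have hl : HasDerivAt (fun x : ℝ => 1 - τ * x) (-τ) δ := by
      simpa using ((hasDerivAt_id δ).const_mul τ).const_sub 1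
    show HasDerivAt (fun x => (1 - τ) ^ p - τ ^ p + τ ^ (p - 1) * dslope (qnum p) 0 x
      - cRem p * (1 - τ * x) ^ (p / 2)) _ _
    exact ((hq.const_mul (τ ^ (p - 1))).const_add _).sub
      ((hl.rpow_const (Or.inl htpos.ne')).const_mul (cRem p))
  have d2 : HasDerivAt (fun x => hfun p (x, δ))
      ((-1) * p * (1 - τ) ^ (p - 1) - p * τ ^ (p - 1)
        + (p - 1) * τ ^ (p - 1 - 1) * dslope (qnum p) 0 δ
        - cRem p * (-δ * (p / 2) * (1 - τ * δ) ^ (p / 2 - 1))) τ := by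
    have hl : HasDerivAt (fun x : ℝ => 1 - x * δ) (-δ) τ := by
      simpa using ((hasDerivAt_id τ).mul_const δ).const_sub 1
    have hl2 : HasDerivAt (fun x : ℝ => 1 - x) (-1) τ := by
      simpa using (hasDerivAt_id τ).const_sub 1
    show HasDerivAt (fun x => (1 - x) ^ p - x ^ p + x ^ (p - 1) * dslope (qnum p) 0 δ
      - cRem p * (1 - x * δ) ^ (p / 2)) _ _
    exact (((hl2.rpow_const (Or.inl (by linarith))).sub
      (hasDerivAt_rpow_const (Or.inl hτ.ne'))).add
      ((hasDerivAt_rpow_const (Or.inl hτ.ne')).mul_const _)).sub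
      ((hl.rpow_const (Or.inl htpos.ne')).const_mul (cRem p))
  have m1 : IsLocalMin (fun x => hfun p (τ, x)) δ :=
    (show Tendsto (fun x : ℝ => (τ, x)) (𝓝 δ) (𝓝 (τ, δ)) from
      (Continuous.prodMk_right τ).tendsto δ).eventually hmin
  have m2 : IsLocalMin (fun x => hfun p (x, δ)) τ :=
    (show Tendsto (fun x : ℝ => (x, δ)) (𝓝 τ) (𝓝 (τ, δ)) from
      (Continuous.prodMk_left δ).tendsto τ).eventually hmin
  have z1 := m1.hasDerivAt_eq_zero d1
  have z2 := m2.hasDerivAt_eq_zero d2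
  have ha : |1 - δ| < 1 := by rw [abs_lt]; constructor <;> linarith
  have hD := crit_nonneg hp ha
  rw [hfun] at hneg
  simp only at hneg
  rw [dslope_qnum hδ.ne'] at hneg z2
  have eφ : |1 - δ| ^ p = (1 - δ) * (|1 - δ| ^ (p - 2) * (1 - δ)) := by
    calc |1 - δ| ^ p = |1 - δ| ^ (p - 2) * |1 - δ| ^ 2 := by
          rw [← rpow_natCast |1 - δ| 2, ← rpow_add' (abs_nonneg _) (by push_cast; linarith)]
          congr 1; push_cast; ring
      _ = _ := by rw [sq_abs]; ring
  rw [eφ] at z1 z2 hneg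
  set φ := |1 - δ| ^ (p - 2) * (1 - δ)
  have eτ : τ ^ (p - 1) = τ * τ ^ (p - 1 - 1) := by
    nth_rewrite 2 [← rpow_one τ]
    rw [← rpow_add hτ]; ring_nf
  have e1τ : (1 - τ) ^ p = (1 - τ) * (1 - τ) ^ (p - 1) :=
    rpow_split (by linarith) (by linarith)
  have eτ' : τ ^ p = τ * τ ^ (p - 1) := rpow_split (by linarith) (by linarith)
  have et : (1 - τ * δ) ^ (p / 2) = (1 - τ * δ) * (1 - τ * δ) ^ (p / 2 - 1) := by
    nth_rewrite 2 [← rpow_one (1 - τ * δ)]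
    rw [← rpow_add htpos]; ring_nf
  rw [eτ', eτ, e1τ, et] at hneg
  rw [eτ] at z1 z2
  have hU : 0 < τ ^ (p - 1 - 1) := rpow_pos_of_pos hτ _
  set U := τ ^ (p - 1 - 1)
  set S := (1 - τ) ^ (p - 1)
  set W := (1 - τ * δ) ^ (p / 2 - 1)
  set q := (1 - (1 - δ) * φ) / δ with hqdef
  have hqδ : q * δ = 1 - (1 - δ) * φ := by rw [hqdef]; field_simp
  -- first-order conditions in polynomial form, with `P = cRem p * (p / 2) * W`
  have y1 : U * (p * φ - q) + cRem p * (p / 2) * W * δ = 0 := by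
    have : (p * φ * δ - (1 - (1 - δ) * φ)) / δ ^ 2 = (p * φ - q) / δ := by
      rw [← hqδ]; field_simp
    rw [this] at z1
    have h : τ * (U * (p * φ - q) + cRem p * (p / 2) * W * δ) = 0 := by
      have := congrArg (fun x => x * δ) z1
      simp only [zero_mul] at this
      rw [← this]; field_simp; ring
    exact (mul_eq_zero.1 h).resolve_left hτ.ne'
  have y2 : S = U * (q - φ) - τ * U := by
    have hp0 : p ≠ 0 := by linarith
    have : p * (S - (U * (q - φ) - τ * U)) = 0 := by linarith
    have := (mul_eq_zero.1 this).resolve_left hp0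
    linarith
  -- the assumption `hfun p (τ, δ) < 0`, simplified with the second condition
  have y3 : U * ((q - φ) * (1 - τ * δ)) < cRem p * ((1 - τ * δ) * W) := by
    have : (1 - τ) * S - τ * (τ * U) + τ * U * q = U * ((q - φ) * (1 - τ * δ)) := by
      rw [y2]
      have : (q - φ) * δ = 1 - φ := by linear_combination hqδ
      have h2 : (q - φ) * (1 - τ * δ) = (q - φ) - τ * (1 - φ) := by
        linear_combination (-τ) * this
      rw [h2]; ring
    linarith
  have y4 : U * (q - φ) < cRem p * W := by
    have : (U * (q - φ)) * (1 - τ * δ) < (cRem p * W) * (1 - τ * δ) := by linarith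
    exact lt_of_mul_lt_mul_right this htpos.le
  -- the first condition eliminates `W`; what remains contradicts `crit_nonneg`
  have y5 : U * ((p / 2) * (q - φ) * δ) < U * (q - p * φ) := by
    have := mul_lt_mul_of_pos_right y4 (by positivity : 0 < p / 2 * δ)
    linarith
  have y6 := lt_of_mul_lt_mul_left y5 hU.le
  have y7 := mul_lt_mul_of_pos_right y6 hδ
  have y8 : (q - φ) * δ = 1 - φ := by linear_combination hqδ
  have y9 : p / 2 * (q - φ) * δ * δ = p / 2 * (1 - φ) * δ := by rw [← y8]; ring
  nlinarith

/-- **Pointwise inequality** behind the ground state substitution. The cases `t ≤ a²` and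
`t ≤ a ≤ 1` are `key_sq` and `key_cov`; the remaining region is compact in the coordinates
`(τ, δ)`, and the minimum of `hfun` over it is nonnegative on the boundary and inside. -/
theorem key_main {p t a : ℝ} (hp : 2 ≤ p) (ht : t ∈ Icc (0 : ℝ) 1) :
    (1 - t) ^ (p - 1) * (|a| ^ p - t) + cRem p * t ^ (p / 2) * |a - 1| ^ p ≤ |a - t| ^ p := by
  have hc0 := cRem_nonneg hp
  have hc1 := cRem_le_one hp
  have of_sq : ∀ {t a : ℝ}, t ∈ Icc (0 : ℝ) 1 → t ≤ a ^ 2 →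
      (1 - t) ^ (p - 1) * (|a| ^ p - t) + cRem p * t ^ (p / 2) * |a - 1| ^ p ≤ |a - t| ^ p := by
    intro t a ht h
    have := key_sq hp ht h
    have h2 : cRem p * t ^ (p / 2) * |a - 1| ^ p ≤ 1 * t ^ (p / 2) * |a - 1| ^ p := by
      have : 0 ≤ t ^ (p / 2) := rpow_nonneg ht.1 _
      gcongr
    linarith
  have of_cov : ∀ {t a : ℝ}, t ∈ Icc (0 : ℝ) 1 → t ≤ a → a ≤ 1 →
      (1 - t) ^ (p - 1) * (|a| ^ p - t) + cRem p * t ^ (p / 2) * |a - 1| ^ p ≤ |a - t| ^ p := by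
    intro t a ht h h1
    have := key_cov hp ht h h1
    have ht2 : t ^ (p / 2) ≤ t := by
      rcases ht.1.eq_or_lt with h | h
      · rw [← h, zero_rpow (by linarith)]
      · calc t ^ (p / 2) ≤ t ^ (1 : ℝ) := rpow_le_rpow_of_exponent_ge h ht.2 (by linarith)
          _ = _ := rpow_one _
    rw [abs_of_nonneg (ht.1.trans h), abs_of_nonneg (sub_nonneg.2 h), abs_sub_comm,
      abs_of_nonneg (sub_nonneg.2 h1)]
    have h2 : cRem p * t ^ (p / 2) * (1 - a) ^ p ≤ 1 * t * (1 - a) ^ p := by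
      have : 0 ≤ t ^ (p / 2) := rpow_nonneg ht.1 _
      have : 0 ≤ (1 - a) ^ p := rpow_nonneg (sub_nonneg.2 h1) _
      gcongr
    linarith
  by_cases h1 : t ≤ a ^ 2
  · exact of_sq ht h1
  push Not at h1
  have ha1 : |a| < 1 := by
    rw [← sq_lt_one_iff_abs_lt_one]; linarith [ht.2]
  rw [abs_lt] at ha1
  by_cases h2 : t ≤ a
  · exact of_cov ht h2 ha1.2.le
  push Not at h2
  -- in the coordinates `a = 1 - δ`, `t = 1 - τ δ`, the region `a ≤ t`, `a² ≤ t` is `K`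
  set K : Set (ℝ × ℝ) := {z | 0 ≤ z.1 ∧ z.1 ≤ 1 ∧ 0 ≤ z.2 ∧ z.2 ≤ 2 - z.1} with hK
  have hKc : IsCompact K := by
    apply (isCompact_Icc (a := ((0 : ℝ), (0 : ℝ))) (b := (1, 2))).of_isClosed_subset
    · exact ((isClosed_le continuous_const continuous_fst).inter
        ((isClosed_le continuous_fst continuous_const).inter
        ((isClosed_le continuous_const continuous_snd).inter
        (isClosed_le continuous_snd (continuous_const.sub continuous_fst)))))
    · rintro ⟨x, y⟩ ⟨a1, a2, a3, a4⟩
      simp only at a1 a2 a3 a4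
      exact ⟨⟨a1, a3⟩, ⟨a2, by simp only; linarith⟩⟩
  have hKpos : ∀ z ∈ K, 0 ≤ hfun p z := by
    obtain ⟨⟨τ, δ⟩, ⟨b1, b2, b3, b4⟩, hmin⟩ := hKc.exists_isMinOn
      ⟨(0, 0), by simp [hK]⟩ (hfun_continuous hp).continuousOn
    simp only at b1 b2 b3 b4
    suffices 0 ≤ hfun p (τ, δ) from fun z hz => this.trans (hmin hz)
    -- `δ = 0`: the definition of `cRem`
    rcases b3.eq_or_lt with c3 | c3
    · rw [← c3, hfun]
      simp only [mul_zero, sub_zero, one_rpow, mul_one, dslope_qnum_zero hp]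
      have := cRem_le hp ⟨b1, b2⟩
      linarith
    have hT : 1 - τ * δ ∈ Icc (0 : ℝ) 1 :=
      ⟨by nlinarith [sq_nonneg (1 - τ)], by nlinarith⟩
    have hδp : 0 < δ ^ p := rpow_pos_of_pos c3 _
    have red : ∀ _ : (1 - (1 - τ * δ)) ^ (p - 1) * (|1 - δ| ^ p - (1 - τ * δ))
        + cRem p * (1 - τ * δ) ^ (p / 2) * |(1 - δ) - 1| ^ p ≤ |(1 - δ) - (1 - τ * δ)| ^ p,
        0 ≤ hfun p (τ, δ) := by
      intro h
      have := hfun_eq hp b1 b2 c3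
      exact nonneg_of_mul_nonneg_right (by linarith) hδp
    -- `τ = 0` is `cRem p ≤ 1`, `τ = 1` means `a = t`, and `δ = 2 - τ` means `t = a²`
    rcases b1.eq_or_lt with c1 | c1
    · rw [← c1, hfun]
      simp only [sub_zero, one_rpow, zero_mul, mul_one]
      rw [zero_rpow (by linarith), zero_rpow (by linarith)]
      linarith
    rcases b2.eq_or_lt with c2 | c2
    · exact red (of_cov hT (by rw [c2]; linarith) (by linarith))
    rcases b4.eq_or_lt with c4 | c4
    · exact red (of_sq hT (by rw [c4]; nlinarith))
    refine hfun_interior hp c1 c2 c3 c4 (hmin.isLocalMin ?_)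
    have ho : IsOpen {z : ℝ × ℝ | 0 < z.1 ∧ z.1 < 1 ∧ 0 < z.2 ∧ z.2 < 2 - z.1} :=
      (isOpen_lt continuous_const continuous_fst).inter
        ((isOpen_lt continuous_fst continuous_const).inter
        ((isOpen_lt continuous_const continuous_snd).inter
        (isOpen_lt continuous_snd (continuous_const.sub continuous_fst))))
    filter_upwards [ho.mem_nhds ⟨c1, c2, c3, c4⟩] with z hz
    exact ⟨hz.1.le, hz.2.1.le, hz.2.2.1.le, hz.2.2.2.le⟩
  have hδ : 0 < 1 - a := by linarith [ha1.2]
  set τ := (1 - t) / (1 - a) with hτ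
  have e : τ * (1 - a) = 1 - t := by rw [hτ]; field_simp
  have hτ0 : 0 ≤ τ := div_nonneg (by linarith [ht.2]) hδ.le
  have hτ1 : τ ≤ 1 := by rw [hτ, div_le_one hδ]; linarith
  have hmem : (τ, 1 - a) ∈ K := by
    refine ⟨hτ0, hτ1, hδ.le, ?_⟩
    show 1 - a ≤ 2 - τ
    have : (1 - a) * (1 - a) ≤ (2 - τ) * (1 - a) := by nlinarith
    exact le_of_mul_le_mul_right this hδ
  have h := mul_nonneg (rpow_nonneg hδ.le p) (hKpos _ hmem)
  rw [hfun_eq hp hτ0 hτ1 hδ, e] at h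
  simp only [sub_sub_cancel] at h
  linarith

/-! ### Coordinate splitting, polar coordinates, and integration along the flat -/

/-- Abbreviation for Euclidean space. -/
abbrev EE (n : ℕ) := EuclideanSpace ℝ (Fin n)

/-- The isometric splitting `ℝ^(k+m) ≃ ℝ^k × ℝ^m` into the first `k` and the last `m` coordinates. -/
def splitIso (k m : ℕ) : EE (k + m) ≃ₗᵢ[ℝ] WithLp 2 (EE k × EE m) :=
  (LinearIsometryEquiv.piLpCongrLeft 2 ℝ ℝ finSumFinEquiv.symm).trans
    (PiLp.sumPiLpEquivProdLpPiLp 2 (fun _ => ℝ))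

/-- The first component of the splitting. -/
def fstE (k m : ℕ) (x : EE (k + m)) : EE k := (splitIso k m x).fst
/-- The second component of the splitting. -/
def sndE (k m : ℕ) (x : EE (k + m)) : EE m := (splitIso k m x).snd

lemma fstE_apply (k m : ℕ) (x : EE (k + m)) (i : Fin k) : fstE k m x i = x (Fin.castAdd m i) := by
  rfl

lemma norm_split (k m : ℕ) (x : EE (k + m)) : ‖x‖ ^ 2 = ‖fstE k m x‖ ^ 2 + ‖sndE k m x‖ ^ 2 := by
  rw [← (splitIso k m).norm_map, WithLp.prod_norm_sq_eq_of_L2]; rfl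

lemma fstE_sub (k m : ℕ) (x y : EE (k + m)) : fstE k m (x - y) = fstE k m x - fstE k m y := by
  simp [fstE]

lemma fstE_add (k m : ℕ) (x y : EE (k + m)) : fstE k m (x + y) = fstE k m x + fstE k m y := by
  simp [fstE]

lemma sndE_sub (k m : ℕ) (x y : EE (k + m)) : sndE k m (x - y) = sndE k m x - sndE k m y := by
  simp [sndE]

/-- The norm `|x_k|` of the theorem is the norm of the first component of the splitting. -/
lemma pnorm_split (k m : ℕ) (x : EE (k + m)) : pnorm (k + m) k x = ‖fstE k m x‖ := by
  rw [pnorm, EuclideanSpace.norm_eq, Fin.sum_univ_add]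
  simp [fstE_apply]

lemma split_measurePreserving (k m : ℕ) :
    MeasurePreserving (fun x : EE (k + m) => (fstE k m x, sndE k m x)) volume
      (volume.prod volume) := by
  have h1 := (splitIso k m).measurePreserving
  have h2 := WithLp.volume_preserving_ofLp (EE k) (EE m)
  exact h2.comp h1

lemma lintegral_split (k m : ℕ) {F : EE k → EE m → ENNReal} (hF : Measurable (Function.uncurry F)) :
    ∫⁻ x : EE (k + m), F (fstE k m x) (sndE k m x) = ∫⁻ y, ∫⁻ z, F y z := by
  have := (split_measurePreserving k m).lintegral_comp hF
  rw [lintegral_prod _ hF.aemeasurable] at this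
  simpa using this

lemma measurable_fstE (k m : ℕ) : Measurable (fstE k m) :=
  measurable_fst.comp (split_measurePreserving k m).measurable

lemma measurable_sndE (k m : ℕ) : Measurable (sndE k m) :=
  measurable_snd.comp (split_measurePreserving k m).measurable

/-- Polar coordinates for the Lebesgue integral of a radial function. -/
lemma lintegral_radial {n : ℕ} (hn : 1 ≤ n) {f : ℝ → ENNReal} (hf : Measurable f) :
    ∫⁻ x : EE n, f ‖x‖ = ENNReal.ofReal (sphereVol (n - 1)) *
      ∫⁻ r in Ioi (0 : ℝ), ENNReal.ofReal (r ^ (n - 1)) * f r := by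
  have : Nonempty (Fin n) := ⟨⟨0, hn⟩⟩
  have : Nontrivial (EE n) := inferInstance
  set μ : Measure (EE n) := volume
  have hs : μ.toSphere univ = ENNReal.ofReal (sphereVol (n - 1)) := by
    rw [Measure.toSphere_apply_univ, EuclideanSpace.volume_ball]
    simp only [finrank_euclideanSpace, Fintype.card_fin, ENNReal.ofReal_one, one_pow, one_mul]
    rw [← ENNReal.ofReal_natCast, ← ENNReal.ofReal_mul (by positivity), sphereVol]
    congr 1
    have h0 : (0:ℝ) < n := by exact_mod_cast hn
    rw [Real.Gamma_add_one (by positivity), Nat.cast_sub hn]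
    have hπ : Real.sqrt π ^ n = π ^ ((n:ℝ) / 2) := by
      rw [Real.sqrt_eq_rpow, ← Real.rpow_natCast, ← Real.rpow_mul pi_pos.le]; congr 1; ring
    rw [hπ]
    have : Real.Gamma ((n:ℝ)/2) ≠ 0 := (Real.Gamma_pos_of_pos (by positivity)).ne'
    simp only [Nat.cast_one, sub_add_cancel]
    field_simp
  calc
    ∫⁻ x, f (‖x‖) ∂μ = ∫⁻ x : ({(0)}ᶜ : Set (EE n)), f (‖x.1‖) ∂(μ.comap (↑)) := by
      rw [lintegral_subtype_comap (measurableSet_singleton _).compl fun x ↦ f (‖x‖),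
        restrict_compl_singleton]
    _ = ∫⁻ x, f x.2 ∂μ.toSphere.prod (.volumeIoiPow (Module.finrank ℝ (EE n) - 1)) := by
      simpa using μ.measurePreserving_homeomorphUnitSphereProd.lintegral_comp_emb
        (Homeomorph.measurableEmbedding _) (f ∘ Subtype.val ∘ Prod.snd)
    _ = μ.toSphere univ * ∫⁻ x : Ioi (0 : ℝ), f x ∂.volumeIoiPow (Module.finrank ℝ (EE n) - 1) := by
      rw [lintegral_prod _ (by fun_prop)]
      simp [mul_comm]
    _ = _ := by
      rw [hs]; congr 1
      simp only [Measure.volumeIoiPow]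
      rw [lintegral_withDensity_eq_lintegral_mul _ (by fun_prop) (by fun_prop),
        ← lintegral_subtype_comap measurableSet_Ioi]
      simp

lemma measurable_ofReal_rpow {X : Type*} [MeasurableSpace X] {f : X → ℝ} (hf : Measurable f)
    (c : ℝ) : Measurable fun x => ENNReal.ofReal (f x ^ c) := (hf.pow_const c).ennreal_ofReal

/-- Gamma subordination: `b^(-q)` as a superposition of exponentials. -/
lemma lintegral_gamma {q b : ℝ} (hq : 0 < q) (hb : 0 < b) :
    ∫⁻ t in Ioi (0:ℝ), ENNReal.ofReal (t ^ (q - 1) * rexp (-(b * t))) =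
      ENNReal.ofReal (b ^ (-q) * Real.Gamma q) := by
  have h := Real.integral_rpow_mul_exp_neg_mul_Ioi hq hb
  have hpos : 0 < b ^ (-q) * Real.Gamma q := mul_pos (by positivity) (Real.Gamma_pos_of_pos hq)
  have hval : ∫ t in Ioi (0:ℝ), t ^ (q - 1) * rexp (-(b * t)) = b ^ (-q) * Real.Gamma q := by
    rw [h, one_div, Real.inv_rpow hb.le, Real.rpow_neg hb.le]
  rw [← hval, ofReal_integral_eq_lintegral_ofReal]
  · by_contra hni
    rw [integral_undef hni] at hval
    exact hpos.ne hval
  · filter_upwards [self_mem_ae_restrict measurableSet_Ioi] with t ht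
    have : (0:ℝ) < t := ht
    positivity

lemma lintegral_gauss (m : ℕ) {t : ℝ} (ht : 0 < t) :
    ∫⁻ z : EE m, ENNReal.ofReal (rexp (-t * ‖z‖ ^ 2)) =
      ENNReal.ofReal ((π / t) ^ ((m : ℝ) / 2)) := by
  have h := GaussianFourier.integral_rexp_neg_mul_sq_norm (V := EE m) ht
  rw [finrank_euclideanSpace, Fintype.card_fin] at h
  have hpos : 0 < (π / t) ^ ((m : ℝ) / 2) := by positivity
  rw [← h, ofReal_integral_eq_lintegral_ofReal]
  · by_contra hni
    rw [integral_undef hni] at h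
    exact hpos.ne h
  · exact Eventually.of_forall fun z => (exp_pos _).le

/-- The constant produced by integrating the kernel over the `m` directions along the flat; it is
the factor in front of `C1` in `CC`. -/
def kap (k m : ℕ) (σ : ℝ) : ℝ :=
  π ^ ((m : ℝ) / 2) * Real.Gamma (((k:ℝ) + σ) / 2) / Real.Gamma (((k:ℝ) + m + σ) / 2)

lemma kap_pos {k m : ℕ} {σ : ℝ} (hσ : 0 < σ) : 0 < kap k m σ := by
  have h1 := Real.Gamma_pos_of_pos (s := ((k:ℝ) + σ) / 2) (by positivity)
  have h2 := Real.Gamma_pos_of_pos (s := ((k:ℝ) + m + σ) / 2) (by positivity)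
  unfold kap; positivity

/-- Integration of the kernel over the `m` directions along the flat. Gamma subordination turns the
power into Gaussians, whose integrals are explicit. -/
lemma lintegral_flat (k m : ℕ) {σ b : ℝ} (hσ : 0 < σ) (hb : 0 < b) :
    ∫⁻ z : EE m, ENNReal.ofReal ((b ^ 2 + ‖z‖ ^ 2) ^ (-((k:ℝ) + m + σ) / 2)) =
      ENNReal.ofReal (kap k m σ) * ENNReal.ofReal (b ^ (-(k:ℝ) - σ)) := by
  set q : ℝ := ((k:ℝ) + m + σ) / 2 with hqd
  have hq : 0 < q := by positivity
  have hG := Real.Gamma_pos_of_pos hq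
  have hG2 := Real.Gamma_pos_of_pos (s := ((k:ℝ) + σ) / 2) (by positivity)
  have e1 : ∀ z : EE m, ENNReal.ofReal ((b ^ 2 + ‖z‖ ^ 2) ^ (-((k:ℝ) + m + σ) / 2)) =
      ENNReal.ofReal (Real.Gamma q)⁻¹ * ∫⁻ t in Ioi (0:ℝ),
        ENNReal.ofReal (t ^ (q - 1) * rexp (-((b ^ 2 + ‖z‖ ^ 2) * t))) := by
    intro z
    rw [lintegral_gamma hq (by positivity), ← ENNReal.ofReal_mul (by positivity)]
    congr 1
    rw [show -((k:ℝ) + m + σ) / 2 = -q by rw [hqd]; ring]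
    field_simp
  simp_rw [e1]
  rw [lintegral_const_mul' _ _ ENNReal.ofReal_ne_top, lintegral_lintegral_swap (by fun_prop)]
  have e2 : ∫⁻ t in Ioi (0:ℝ), ∫⁻ z : EE m,
        ENNReal.ofReal (t ^ (q - 1) * rexp (-((b ^ 2 + ‖z‖ ^ 2) * t))) =
      ∫⁻ t in Ioi (0:ℝ), ENNReal.ofReal (π ^ ((m:ℝ) / 2)) *
        ENNReal.ofReal (t ^ (((k:ℝ) + σ) / 2 - 1) * rexp (-(b ^ 2 * t))) := by
    refine setLIntegral_congr_fun measurableSet_Ioi fun t ht => ?_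
    have ht' : 0 < t := ht
    have : ∀ z : EE m, ENNReal.ofReal (t ^ (q - 1) * rexp (-((b ^ 2 + ‖z‖ ^ 2) * t))) =
        ENNReal.ofReal (t ^ (q - 1) * rexp (-(b ^ 2 * t))) *
          ENNReal.ofReal (rexp (-t * ‖z‖ ^ 2)) := by
      intro z
      rw [← ENNReal.ofReal_mul (by positivity), mul_assoc, ← Real.exp_add]
      ring_nf
    simp_rw [this]
    rw [lintegral_const_mul' _ _ ENNReal.ofReal_ne_top, lintegral_gauss m ht',
      ← ENNReal.ofReal_mul (by positivity), ← ENNReal.ofReal_mul (by positivity)]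
    congr 1
    rw [Real.div_rpow pi_pos.le ht'.le, show q - 1 = (((k:ℝ) + σ) / 2 - 1) + (m:ℝ)/2 by
      rw [hqd]; ring, Real.rpow_add ht']
    field_simp
  rw [e2, lintegral_const_mul' _ _ ENNReal.ofReal_ne_top,
    lintegral_gamma (by positivity) (by positivity), ← ENNReal.ofReal_mul (by positivity),
    ← ENNReal.ofReal_mul (by positivity), ← ENNReal.ofReal_mul (kap_pos hσ).le]
  congr 1
  rw [kap, ← hqd, ← Real.rpow_natCast, ← Real.rpow_mul hb.le,
    show ((2:ℕ):ℝ) * -(((k:ℝ) + σ) / 2) = -(k:ℝ) - σ by push_cast; ring]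
  field_simp

/-! ### Spherical integrals of the kernel -/

/-- The integral of `|x - y|^(-q)` over the sphere `|y| = r` in `ℝ^k` (with unit-sphere surface
measure), as a function of `a = |x|` and `r`. For `k ≥ 2` it is written with the angle `φ` between
`x` and `y`; for `k = 1` the sphere is the pair of points `±r`. -/
def Psi (k : ℕ) (q a r : ℝ) : ENNReal :=
  if k = 1 then ENNReal.ofReal (|a - r| ^ (-q)) + ENNReal.ofReal ((a + r) ^ (-q))
  else ENNReal.ofReal (sphereVol (k - 2)) * ∫⁻ φ in Ioo 0 π,
    ENNReal.ofReal (sin φ ^ (k - 2)) *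
      ENNReal.ofReal ((a ^ 2 - 2 * a * r * cos φ + r ^ 2) ^ (-q / 2))

lemma lintegral_EE_one {F : ℝ → ENNReal} (hF : Measurable F) :
    ∫⁻ y : EE 1, F (y 0) = ∫⁻ c, F c := by
  have h1 := PiLp.volume_preserving_ofLp (Fin 1)
  have h2 := volume_preserving_funUnique (Fin 1) ℝ
  exact (h2.comp h1).lintegral_comp hF

lemma norm_EE_one (y : EE 1) : ‖y‖ = |y 0| := by
  rw [EuclideanSpace.norm_eq]; simp [Real.sqrt_sq_eq_abs]

lemma measurable_Psi (k : ℕ) (q : ℝ) : Measurable fun z : ℝ × ℝ => Psi k q z.1 z.2 := by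
  unfold Psi
  split_ifs
  · exact (measurable_ofReal_rpow (by fun_prop) _).add (measurable_ofReal_rpow (by fun_prop) _)
  · refine Measurable.const_mul ?_ _
    refine Measurable.lintegral_prod_right' (f := fun w : (ℝ × ℝ) × ℝ =>
      ENNReal.ofReal (sin w.2 ^ (k - 2)) *
      ENNReal.ofReal ((w.1.1 ^ 2 - 2 * w.1.1 * w.1.2 * cos w.2 + w.1.2 ^ 2) ^ (-q / 2))) ?_
    exact Measurable.mul (by fun_prop) (measurable_ofReal_rpow (by fun_prop) _)

lemma Psi_symm (k : ℕ) (q a r : ℝ) : Psi k q a r = Psi k q r a := by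
  unfold Psi
  split_ifs
  · rw [abs_sub_comm, add_comm a r]
  · congr 1
    refine lintegral_congr fun φ => ?_
    congr 3; ring

lemma quad_nonneg (a r φ : ℝ) : 0 ≤ a ^ 2 - 2 * a * r * cos φ + r ^ 2 := by
  nlinarith [sq_nonneg (a - r * cos φ), sq_nonneg r, cos_sq_add_sin_sq φ, sq_nonneg (r * sin φ)]

lemma Psi_homog (k : ℕ) (q : ℝ) {l : ℝ} (hl : 0 < l) {a r : ℝ} (ha : 0 ≤ a) (hr : 0 ≤ r) :
    Psi k q (l * a) (l * r) = ENNReal.ofReal (l ^ (-q)) * Psi k q a r := by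
  unfold Psi
  split_ifs
  · rw [← mul_sub, ← mul_add, abs_mul, abs_of_pos hl, Real.mul_rpow hl.le (abs_nonneg _),
      Real.mul_rpow hl.le (by positivity), ENNReal.ofReal_mul (by positivity),
      ENNReal.ofReal_mul (by positivity), mul_add]
  · rw [mul_left_comm (ENNReal.ofReal (l ^ (-q)))]
    congr 1
    rw [← lintegral_const_mul' _ _ ENNReal.ofReal_ne_top]
    refine lintegral_congr fun φ => ?_
    rw [mul_left_comm (ENNReal.ofReal (l ^ (-q))), ← ENNReal.ofReal_mul (p := l ^ (-q)) (by positivity)]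
    congr 2
    rw [show (l * a) ^ 2 - 2 * (l * a) * (l * r) * cos φ + (l * r) ^ 2 =
      l ^ 2 * (a ^ 2 - 2 * a * r * cos φ + r ^ 2) by ring,
      Real.mul_rpow (by positivity) (quad_nonneg _ _ _), ← Real.rpow_natCast,
      ← Real.rpow_mul hl.le]
    congr 2; push_cast; ring

/-- The behaviour of `Psi` under inversion, from homogeneity and symmetry. -/
lemma Psi_inv (k : ℕ) (q : ℝ) {r : ℝ} (hr : 0 < r) :
    Psi k q 1 r⁻¹ = ENNReal.ofReal (r ^ q) * Psi k q 1 r := by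
  have h := Psi_homog k q hr (a := 1) (r := r⁻¹) zero_le_one (by positivity)
  rw [mul_one, mul_inv_cancel₀ hr.ne', Psi_symm] at h
  rw [h, ← mul_assoc, ← ENNReal.ofReal_mul (by positivity), ← Real.rpow_add hr]
  simp

/-- Existence of a linear isometry moving `x` to a prescribed vector of the same norm. -/
lemma exists_isometry {n : ℕ} (x y : EE n) (h : ‖x‖ = ‖y‖) : ∃ R : EE n ≃ₗᵢ[ℝ] EE n, R x = y :=
  ⟨_, Submodule.reflection_sub h⟩

/-- The case `k = 1` of `ker_radial`. -/
lemma ker_one {q : ℝ} {a : ℝ} (ha : 0 < a) {G : ℝ → ENNReal} (hG : Measurable G) (x : EE 1)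
    (hx : ‖x‖ = a) :
    ∫⁻ y : EE 1, G ‖y‖ * ENNReal.ofReal (‖x - y‖ ^ (-q)) =
      ∫⁻ r in Ioi (0:ℝ), G r * Psi 1 q a r := by
  obtain ⟨R, hR⟩ := exists_isometry x (EuclideanSpace.single 0 a) (by simp [hx, abs_of_pos ha])
  have hm : Measurable fun c : ℝ => G |c| * ENNReal.ofReal (|a - c| ^ (-q)) :=
    (hG.comp measurable_norm).mul (measurable_ofReal_rpow (by fun_prop) _)
  have e1 : ∫⁻ y : EE 1, G ‖y‖ * ENNReal.ofReal (‖x - y‖ ^ (-q)) =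
      ∫⁻ y : EE 1, G ‖y‖ * ENNReal.ofReal (‖EuclideanSpace.single 0 a - y‖ ^ (-q)) := by
    rw [← R.measurePreserving.lintegral_comp (f := fun y : EE 1 =>
      G ‖y‖ * ENNReal.ofReal (‖EuclideanSpace.single 0 a - y‖ ^ (-q)))]
    · refine lintegral_congr fun y => ?_
      rw [R.norm_map, ← hR, ← map_sub, R.norm_map]
    · exact (hG.comp measurable_norm).mul (measurable_ofReal_rpow (by fun_prop) _)
  rw [e1]
  have e2 : ∀ y : EE 1, G ‖y‖ * ENNReal.ofReal (‖EuclideanSpace.single 0 a - y‖ ^ (-q)) =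
      (fun c : ℝ => G |c| * ENNReal.ofReal (|a - c| ^ (-q))) (y 0) := by
    intro y
    simp [norm_EE_one]
  simp_rw [e2]
  rw [lintegral_EE_one hm, ← lintegral_add_compl _ (measurableSet_Ioi (a := (0:ℝ))), compl_Ioi,
    setLIntegral_congr (Iio_ae_eq_Iic (a := (0:ℝ))).symm]
  have e3 : ∫⁻ c in Iio (0:ℝ), G |c| * ENNReal.ofReal (|a - c| ^ (-q)) =
      ∫⁻ c in Ioi (0:ℝ), G c * ENNReal.ofReal ((a + c) ^ (-q)) := by
    have := (Measure.measurePreserving_neg (volume : Measure ℝ)).setLIntegral_comp_preimage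
      (measurableSet_Iio (a := (0:ℝ))) hm
    rw [← this]
    simp only [Set.neg_preimage, Set.neg_Iio, neg_zero]
    refine setLIntegral_congr_fun measurableSet_Ioi fun c hc => ?_
    have hc' : 0 < c := hc
    simp only [abs_neg, abs_of_pos hc', sub_neg_eq_add]
    rw [abs_of_pos (by positivity)]
  rw [e3, ← lintegral_add_left hm]
  refine setLIntegral_congr_fun measurableSet_Ioi fun c hc => ?_
  have hc' : 0 < c := hc
  simp only [Psi, if_true, abs_of_pos hc']
  rw [mul_add]

/-- The case `k = 1 + n ≥ 2` of `ker_radial`. After a rotation `x` lies on the first axis; polar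
coordinates in the orthogonal complement leave an integral over a half-plane. -/
lemma ker_succ {n : ℕ} (hn : 1 ≤ n) {q : ℝ} {a : ℝ} (ha : 0 < a) {G : ℝ → ENNReal}
    (hG : Measurable G) (x : EE (1 + n)) (hx : ‖x‖ = a) :
    ∫⁻ y : EE (1 + n), G ‖y‖ * ENNReal.ofReal (‖x - y‖ ^ (-q)) =
      ∫⁻ r in Ioi (0:ℝ), G r * ENNReal.ofReal (r ^ n) * Psi (1 + n) q a r := by
  set e : EE (1 + n) := (splitIso 1 n).symm (WithLp.toLp 2 (EuclideanSpace.single 0 a, 0)) with he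
  have hfst : fstE 1 n e = EuclideanSpace.single 0 a := by simp [fstE, he]
  have hsnd : sndE 1 n e = 0 := by simp [sndE, he]
  have hnorm : ∀ y : EE (1 + n), ‖y‖ = √(fstE 1 n y 0 ^ 2 + ‖sndE 1 n y‖ ^ 2) := by
    intro y
    rw [← Real.sqrt_sq (norm_nonneg y), norm_split, norm_EE_one, sq_abs]
  have hne : ‖e‖ = a := by
    rw [hnorm, hfst, hsnd]; simp [Real.sqrt_sq ha.le]
  obtain ⟨R, hR⟩ := exists_isometry x e (hx.trans hne.symm)
  have e1 : ∫⁻ y : EE (1 + n), G ‖y‖ * ENNReal.ofReal (‖x - y‖ ^ (-q)) =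
      ∫⁻ y : EE (1 + n), G ‖y‖ * ENNReal.ofReal (‖e - y‖ ^ (-q)) := by
    rw [← R.measurePreserving.lintegral_comp (f := fun y : EE (1 + n) =>
      G ‖y‖ * ENNReal.ofReal (‖e - y‖ ^ (-q)))]
    · refine lintegral_congr fun y => ?_
      rw [R.norm_map, ← hR, ← map_sub, R.norm_map]
    · exact (hG.comp measurable_norm).mul (measurable_ofReal_rpow (by fun_prop) _)
  set F : ℝ → ℝ → ENNReal := fun c ρ => G (√(c ^ 2 + ρ ^ 2)) *
    ENNReal.ofReal (((a - c) ^ 2 + ρ ^ 2) ^ (-q / 2)) with hF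
  have hFm : Measurable (Function.uncurry F) := by
    refine Measurable.mul (hG.comp ?_) (measurable_ofReal_rpow ?_ _) <;> fun_prop
  have e2 : ∀ y : EE (1 + n), G ‖y‖ * ENNReal.ofReal (‖e - y‖ ^ (-q)) =
      F (fstE 1 n y 0) ‖sndE 1 n y‖ := by
    intro y
    rw [hnorm y, hnorm (e - y), fstE_sub, sndE_sub, hfst, hsnd, zero_sub, norm_neg,
      Real.sqrt_eq_rpow, Real.sqrt_eq_rpow, ← Real.rpow_mul (by positivity)]
    simp only [hF, Real.sqrt_eq_rpow]
    congr 3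
    simp
    ring
  rw [e1]
  simp_rw [e2]
  have hFm2 : Measurable (Function.uncurry fun (w : EE 1) (z : EE n) => F (w 0) ‖z‖) := by
    exact hFm.comp (f := fun p : EE 1 × EE n => (p.1 0, ‖p.2‖)) (by fun_prop)
  rw [lintegral_split 1 n (F := fun w z => F (w 0) ‖z‖) hFm2]
  have hFc : ∀ c, Measurable (F c) := fun c => hFm.comp measurable_prodMk_left
  simp_rw [fun w : EE 1 => lintegral_radial hn (hFc (w 0))]
  have hFm3 : Measurable fun c : ℝ => ∫⁻ r in Ioi (0 : ℝ), ENNReal.ofReal (r ^ (n - 1)) * F c r := by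
    refine Measurable.lintegral_prod_right' (f := fun w : ℝ × ℝ =>
      ENNReal.ofReal (w.2 ^ (n - 1)) * F w.1 w.2) ?_
    exact Measurable.mul (by fun_prop) hFm
  rw [lintegral_EE_one (F := fun c => ENNReal.ofReal (sphereVol (n - 1)) *
      ∫⁻ r in Ioi (0 : ℝ), ENNReal.ofReal (r ^ (n - 1)) * F c r) (hFm3.const_mul _),
    lintegral_const_mul _ hFm3]
  -- write the half-plane integral as an integral over the plane and use polar coordinates
  set H : ℝ × ℝ → ENNReal := fun w =>
    (Ioi (0:ℝ)).indicator (fun r => ENNReal.ofReal (r ^ (n - 1)) * F w.1 r) w.2 with hH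
  have hHm : Measurable H := by
    have : H = ({w : ℝ × ℝ | 0 < w.2}).indicator
        (fun w => ENNReal.ofReal (w.2 ^ (n - 1)) * F w.1 w.2) := by
      ext w; by_cases h : 0 < w.2 <;> simp [hH, h, indicator]
    rw [this]
    refine Measurable.indicator ?_ (measurableSet_lt measurable_const measurable_snd)
    exact Measurable.mul (by fun_prop) hFm
  have e4 : ∫⁻ c, ∫⁻ r in Ioi (0 : ℝ), ENNReal.ofReal (r ^ (n - 1)) * F c r = ∫⁻ w, H w := by
    rw [Measure.volume_eq_prod, lintegral_prod _ hHm.aemeasurable]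
    refine lintegral_congr fun c => ?_
    rw [← lintegral_indicator measurableSet_Ioi]
  rw [e4, ← lintegral_comp_polarCoord_symm, polarCoord_target]
  rw [Measure.volume_eq_prod, ← Measure.prod_restrict]
  rw [lintegral_prod]
  swap
  · refine Measurable.aemeasurable ?_
    refine Measurable.smul (M := ENNReal) (by fun_prop) (hHm.comp ?_)
    exact (continuous_polarCoord_symm).measurable
  rw [← lintegral_const_mul']
  swap
  · exact ENNReal.ofReal_ne_top
  refine setLIntegral_congr_fun measurableSet_Ioi fun r hr => ?_
  have hr' : 0 < r := hr
  have e5 : ∫⁻ φ in Ioo (-π) π, ENNReal.ofReal r • H (polarCoord.symm (r, φ)) =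
      ∫⁻ φ in Ioo 0 π, G r * ENNReal.ofReal (r ^ n) * (ENNReal.ofReal (sin φ ^ (n - 1)) *
      ENNReal.ofReal ((a ^ 2 - 2 * a * r * cos φ + r ^ 2) ^ (-q / 2))) := by
    rw [← lintegral_indicator measurableSet_Ioo, ← lintegral_indicator measurableSet_Ioo]
    refine lintegral_congr fun φ => ?_
    by_cases h1 : φ ∈ Ioo (-π) π
    · rw [indicator_of_mem h1]
      by_cases h2 : 0 < φ
      · have hs : 0 < sin φ := sin_pos_of_pos_of_lt_pi h2 h1.2
        have h3 : φ ∈ Ioo 0 π := ⟨h2, h1.2⟩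
        rw [indicator_of_mem h3]
        have h4 : r * sin φ ∈ Ioi (0:ℝ) := mul_pos hr' hs
        simp only [hH, polarCoord_symm_apply, indicator_of_mem h4, hF, smul_eq_mul]
        rw [show (r * cos φ) ^ 2 + (r * sin φ) ^ 2 = r ^ 2 * (cos φ ^ 2 + sin φ ^ 2) by ring,
          cos_sq_add_sin_sq, mul_one, Real.sqrt_sq hr'.le,
          show (a - r * cos φ) ^ 2 + (r * sin φ) ^ 2 =
            a ^ 2 - 2 * a * r * cos φ + r ^ 2 * (cos φ ^ 2 + sin φ ^ 2) by ring,
          cos_sq_add_sin_sq, mul_one, mul_pow, ENNReal.ofReal_mul (by positivity),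
          show r ^ n = r * r ^ (n - 1) by rw [← pow_succ', Nat.sub_add_cancel hn],
          ENNReal.ofReal_mul hr'.le]
        ring
      · have h3 : φ ∉ Ioo 0 π := fun h => h2 h.1
        rw [indicator_of_notMem h3]
        have hs : sin φ ≤ 0 := sin_nonpos_of_nonpos_of_neg_pi_le (not_lt.1 h2) h1.1.le
        have h4 : r * sin φ ∉ Ioi (0:ℝ) := by
          simp only [mem_Ioi, not_lt]; exact mul_nonpos_of_nonneg_of_nonpos hr'.le hs
        simp [hH, polarCoord_symm_apply, indicator_of_notMem h4]
    · have h3 : φ ∉ Ioo 0 π := fun h => h1 ⟨by linarith [h.1, pi_pos], h.2⟩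
      rw [indicator_of_notMem h1, indicator_of_notMem h3]
  rw [e5, lintegral_const_mul, Psi, if_neg (by omega), show 1 + n - 2 = n - 1 by omega]
  · ring
  · exact Measurable.mul (by fun_prop) (measurable_ofReal_rpow (by fun_prop) _)

/-- Integration of a radial function against `|x - y|^(-q)` on `ℝ^k`. -/
lemma ker_radial {k : ℕ} (hk : 1 ≤ k) {q : ℝ} {G : ℝ → ENNReal}
    (hG : Measurable G) (x : EE k) (hx : 0 < ‖x‖) :
    ∫⁻ y : EE k, G ‖y‖ * ENNReal.ofReal (‖x - y‖ ^ (-q)) =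
      ∫⁻ r in Ioi (0:ℝ), G r * ENNReal.ofReal (r ^ (k - 1)) * Psi k q ‖x‖ r := by
  obtain ⟨n, rfl⟩ := Nat.exists_eq_add_of_le hk
  rcases Nat.eq_zero_or_pos n with rfl | hn
  · simpa using ker_one hx hG x rfl
  · simpa using ker_succ hn hx hG x rfl

/-! ### The kernel against functions of the distance to the flat -/

/-- The Bochner integral is at most the Lebesgue integral; no integrability is required since the
left side is `0` otherwise. -/
lemma ofReal_integral_le {X : Type*} [MeasurableSpace X] {μ : Measure X} {f : X → ℝ}
    (hf : ∀ᵐ x ∂μ, 0 ≤ f x) : ENNReal.ofReal (∫ x, f x ∂μ) ≤ ∫⁻ x, ENNReal.ofReal (f x) ∂μ := by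
  calc ENNReal.ofReal (∫ x, f x ∂μ) ≤ ‖∫ x, f x ∂μ‖ₑ := by
        rw [← ofReal_norm]; exact ENNReal.ofReal_le_ofReal (le_abs_self _)
    _ ≤ ∫⁻ x, ‖f x‖ₑ ∂μ := enorm_integral_le_lintegral_enorm _
    _ = _ := lintegral_congr_ae (hf.mono fun x hx => Real.enorm_eq_ofReal hx)

lemma sphereVol_pos (m : ℕ) : 0 < sphereVol m := by
  have := Real.Gamma_pos_of_pos (s := ((m:ℝ) + 1) / 2) (by positivity)
  unfold sphereVol; positivity

/-- The profile `Phi` is at most `Psi` on `(0, 1)`, by the substitution `t = cos φ`. Equality holds,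
but only this bound is needed, and it avoids an integrability proof. -/
lemma Phi_le_Psi {k : ℕ} (hk : 1 ≤ k) {s p r : ℝ} (hr : r ∈ Ioo (0:ℝ) 1) :
    ENNReal.ofReal (Phi k s p r) ≤ Psi k (k + s * p) 1 r := by
  unfold Phi Psi
  split_ifs with h1
  · subst h1
    have : 0 < 1 - r := by linarith [hr.2]
    have : 0 < 1 + r := by linarith [hr.1]
    rw [abs_of_pos (by linarith), ENNReal.ofReal_add (by positivity) (by positivity)]
    refine le_of_eq ?_
    congr 3 <;> · push_cast; ring
  · rw [ENNReal.ofReal_mul (sphereVol_pos _).le]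
    gcongr
    have himg : cos '' Ioo 0 π = Ioo (-1) 1 := by
      ext t
      constructor
      · rintro ⟨φ, hφ, rfl⟩
        have h1 := strictAntiOn_cos ⟨hφ.1.le, hφ.2.le⟩ ⟨pi_pos.le, le_rfl⟩ hφ.2
        have h2 := strictAntiOn_cos ⟨le_rfl, pi_pos.le⟩ ⟨hφ.1.le, hφ.2.le⟩ hφ.1
        simp at h1 h2
        exact ⟨h1, h2⟩
      · rintro ⟨h1, h2⟩
        refine ⟨arccos t, ⟨arccos_pos.2 h2, ?_⟩, cos_arccos h1.le h2.le⟩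
        rcases (arccos_le_pi t).lt_or_eq with h | h
        · exact h
        · rw [arccos_eq_pi] at h; linarith
    rw [← Measure.restrict_congr_set Ioo_ae_eq_Icc]
    refine (ofReal_integral_le ?_).trans ?_
    · filter_upwards [self_mem_ae_restrict measurableSet_Ioo] with t ht
      have h1 : 0 ≤ 1 - t ^ 2 := by nlinarith [ht.1, ht.2]
      have h2 : 0 ≤ 1 - 2 * t * r + r ^ 2 := by nlinarith [sq_nonneg (t - r)]
      positivity
    · rw [← himg, lintegral_image_eq_lintegral_abs_deriv_mul measurableSet_Ioo
        (fun x _ => (hasDerivAt_cos x).hasDerivWithinAt)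
        (injOn_cos.mono Ioo_subset_Icc_self)]
      refine le_of_eq (setLIntegral_congr_fun measurableSet_Ioo fun φ hφ => ?_)
      have hs : 0 < sin φ := sin_pos_of_pos_of_lt_pi hφ.1 hφ.2
      have hq := quad_nonneg 1 r φ
      rw [abs_neg, abs_of_pos hs, ← ENNReal.ofReal_mul hs.le, ← ENNReal.ofReal_mul (by positivity),
        show 1 - cos φ ^ 2 = sin φ ^ 2 by rw [← sin_sq_add_cos_sq φ]; ring,
        ← mul_assoc, ← Real.rpow_natCast (sin φ) 2, ← Real.rpow_mul hs.le]
      congr 2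
      · nth_rewrite 1 [← Real.rpow_one (sin φ)]
        rw [← Real.rpow_add hs, ← Real.rpow_natCast, Nat.cast_sub (by omega)]
        congr 1; push_cast; ring
      · congr 1 <;> ring

/-- The singularity of `Psi k q 1` at `r = 1` is at most that of `(1 - r) ^ (-q)`. -/
lemma Psi_bound {k : ℕ} {q : ℝ} (hq : 0 < q) : ∃ M : ENNReal, M ≠ ⊤ ∧ ∀ r ∈ Ioo (0:ℝ) 1,
    Psi k q 1 r ≤ M * ENNReal.ofReal ((1 - r) ^ (-q)) := by
  by_cases h1 : k = 1
  · refine ⟨2, by simp, fun r hr => ?_⟩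
    have h0 : 0 < 1 - r := by linarith [hr.2]
    rw [Psi, if_pos h1, two_mul, abs_of_pos h0]
    refine add_le_add le_rfl (ENNReal.ofReal_le_ofReal ?_)
    exact Real.rpow_le_rpow_of_nonpos h0 (by linarith [hr.1]) (by linarith)
  · refine ⟨ENNReal.ofReal (sphereVol (k - 2)) * ENNReal.ofReal (π - 0), by finiteness, fun r hr => ?_⟩
    have h0 : 0 < 1 - r := by linarith [hr.2]
    rw [Psi, if_neg h1, mul_assoc (ENNReal.ofReal (sphereVol (k - 2)))]
    gcongr
    calc _ ≤ ∫⁻ φ in Ioo 0 π, ENNReal.ofReal ((1 - r) ^ (-q)) := by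
          refine setLIntegral_mono measurable_const fun φ hφ => ?_
          have hs : 0 < sin φ := sin_pos_of_pos_of_lt_pi hφ.1 hφ.2
          rw [← ENNReal.ofReal_mul (by positivity)]
          refine ENNReal.ofReal_le_ofReal ?_
          have e1 : (1 - r) ^ (-q) = ((1 - r) ^ 2) ^ (-q / 2) := by
            rw [← Real.rpow_natCast, ← Real.rpow_mul h0.le]; congr 1; push_cast; ring
          rw [e1]
          have hle : (1 - r) ^ 2 ≤ 1 ^ 2 - 2 * 1 * r * cos φ + r ^ 2 := by
            nlinarith [cos_le_one φ, hr.1]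
          have := Real.rpow_le_rpow_of_nonpos (by positivity) hle (z := -q / 2) (by linarith)
          have hs1 : sin φ ^ (k - 2) ≤ 1 := pow_le_one₀ hs.le (sin_le_one φ)
          have := quad_nonneg 1 r φ
          calc _ ≤ 1 * (1 ^ 2 - 2 * 1 * r * cos φ + r ^ 2) ^ (-q / 2) := by gcongr
            _ ≤ _ := by rwa [one_mul]
      _ = _ := by simp [mul_comm]

/-- The kernel `|x - y|^(-d-σ)` integrated against a function of `|y_k|`. -/
lemma ker_flat {k m : ℕ} (hk : 1 ≤ k) {σ : ℝ} (hσ : 0 < σ) {G : ℝ → ENNReal} (hG : Measurable G)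
    (x : EE (k + m)) (hx : 0 < ‖fstE k m x‖) :
    ∫⁻ y : EE (k + m), G ‖fstE k m y‖ * ENNReal.ofReal (‖x - y‖ ^ (-((k + m : ℕ) : ℝ) - σ)) =
      ENNReal.ofReal (kap k m σ) * ∫⁻ r in Ioi (0:ℝ),
        G r * ENNReal.ofReal (r ^ (k - 1)) * Psi k (k + σ) ‖fstE k m x‖ r := by
  have : Nonempty (Fin k) := ⟨⟨0, hk⟩⟩
  have : Nontrivial (EE k) := inferInstance
  set F : EE k → EE m → ENNReal := fun w z => G ‖w‖ *
    ENNReal.ofReal ((‖fstE k m x - w‖ ^ 2 + ‖sndE k m x - z‖ ^ 2) ^ (-((k:ℝ) + m + σ) / 2)) with hF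
  have hFm : Measurable (Function.uncurry F) := by
    refine Measurable.mul (hG.comp ?_) (measurable_ofReal_rpow ?_ _) <;> fun_prop
  have e1 : ∀ y : EE (k + m), G ‖fstE k m y‖ *
      ENNReal.ofReal (‖x - y‖ ^ (-((k + m : ℕ) : ℝ) - σ)) = F (fstE k m y) (sndE k m y) := by
    intro y
    simp only [hF]
    rw [← fstE_sub, ← sndE_sub, ← norm_split, ← Real.rpow_natCast, ← Real.rpow_mul (norm_nonneg _)]
    congr 3; push_cast; ring
  simp_rw [e1]
  rw [lintegral_split k m hFm, ← ker_radial hk hG _ hx, ← lintegral_const_mul' _ _ ENNReal.ofReal_ne_top]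
  refine lintegral_congr_ae ?_
  have hne : ∀ᵐ w : EE k, w ≠ fstE k m x := by
    rw [ae_iff]; simp
  filter_upwards [hne] with w hw
  simp only [hF]
  have hb : 0 < ‖fstE k m x - w‖ := norm_pos_iff.2 (sub_ne_zero.2 hw.symm)
  have hz : Measurable fun z : EE m => ENNReal.ofReal ((‖fstE k m x - w‖ ^ 2 +
      ‖sndE k m x - z‖ ^ 2) ^ (-((k:ℝ) + m + σ) / 2)) := measurable_ofReal_rpow (by fun_prop) _
  rw [lintegral_const_mul _ hz, lintegral_sub_left_eq_self (fun z : EE m =>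
    ENNReal.ofReal ((‖fstE k m x - w‖ ^ 2 + ‖z‖ ^ 2) ^ (-((k:ℝ) + m + σ) / 2))),
    lintegral_flat k m hσ hb]
  rw [show -((k:ℝ) + σ) = -(k:ℝ) - σ by ring]
  ring

lemma lintegral_Ioi_scale {a : ℝ} (ha : 0 < a) (f : ℝ → ENNReal) :
    ∫⁻ r in Ioi (0:ℝ), f r = ∫⁻ r in Ioi (0:ℝ), ENNReal.ofReal a * f (a * r) := by
  have himg : (fun r => a * r) '' Ioi (0:ℝ) = Ioi 0 := by
    rw [image_mul_left_Ioi ha, mul_zero]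
  have := lintegral_image_eq_lintegral_abs_deriv_mul (s := Ioi (0:ℝ)) (f := fun r => a * r)
    (f' := fun _ => a) measurableSet_Ioi
    (fun x _ => by simpa using ((hasDerivAt_id x).const_mul a).hasDerivWithinAt)
    (mul_right_injective₀ ha.ne').injOn f
  rw [himg, abs_of_pos ha] at this
  exact this

/-- The change of variables `r ↦ r⁻¹` on a set of positive reals. -/
lemma lintegral_inv_Ioi (f : ℝ → ENNReal) {A B : Set ℝ} (hA : MeasurableSet A)
    (hA0 : A ⊆ Ioi 0) (hB : (fun r : ℝ => r⁻¹) '' A = B) :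
    ∫⁻ r in B, f r = ∫⁻ r in A, ENNReal.ofReal (r ^ (-2 : ℝ)) * f r⁻¹ := by
  have := lintegral_image_eq_lintegral_abs_deriv_mul (s := A) (f := fun r => r⁻¹)
    (f' := fun r => -(r ^ 2)⁻¹) hA
    (fun x hx => (hasDerivAt_inv (ne_of_gt (hA0 hx))).hasDerivWithinAt)
    inv_injective.injOn f
  rw [← hB, this]
  refine setLIntegral_congr_fun hA fun r hr => ?_
  have hr' : 0 < r := hA0 hr
  rw [abs_neg, abs_of_pos (by positivity), Real.rpow_neg hr'.le]; norm_num

/-- Scaled form of `ker_flat`. -/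
lemma ker_flat_scaled {k m : ℕ} (hk : 1 ≤ k) {σ : ℝ} (hσ : 0 < σ) {G : ℝ → ENNReal}
    (hG : Measurable G) (x : EE (k + m)) {a : ℝ} (hxa : ‖fstE k m x‖ = a) (ha : 0 < a) :
    ∫⁻ y : EE (k + m), G ‖fstE k m y‖ * ENNReal.ofReal (‖x - y‖ ^ (-((k + m : ℕ) : ℝ) - σ)) =
      ENNReal.ofReal (kap k m σ) * (ENNReal.ofReal (a ^ (-σ)) * ∫⁻ r in Ioi (0:ℝ),
        G (a * r) * ENNReal.ofReal (r ^ (k - 1)) * Psi k (k + σ) 1 r) := by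
  rw [ker_flat hk hσ hG x (hxa ▸ ha), hxa, lintegral_Ioi_scale ha,
    ← lintegral_const_mul' (ENNReal.ofReal (a ^ (-σ))) _ ENNReal.ofReal_ne_top]
  congr 1
  refine setLIntegral_congr_fun measurableSet_Ioi fun r hr => ?_
  have hr' : 0 < r := hr
  have h := Psi_homog k (k + σ) ha zero_le_one hr'.le
  rw [mul_one] at h
  rw [h, mul_pow, ENNReal.ofReal_mul (by positivity)]
  have e : ENNReal.ofReal (a ^ (-σ)) = ENNReal.ofReal a * ENNReal.ofReal (a ^ (k - 1)) *
      ENNReal.ofReal (a ^ (-((k:ℝ) + σ))) := by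
    rw [← ENNReal.ofReal_mul ha.le, ← pow_succ', Nat.sub_add_cancel hk,
      ← ENNReal.ofReal_mul (by positivity), ← Real.rpow_natCast, ← Real.rpow_add ha]
    congr 2; ring
  rw [e]; ring

/-! ### Homogeneous inequality and radial weights -/

lemma measurable_Psi_right (k : ℕ) (q a : ℝ) : Measurable (Psi k q a) := by
  have h : Measurable fun r : ℝ => (a, r) := measurable_prodMk_left
  have := (measurable_Psi k q).comp h
  simpa only [Function.comp_def] using this

/-- The homogeneous form of `key_main`, with `t = w₂ / w₁` and `a = v₁ / v₂`. It is applied to the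
powers `wᵢ = |x_k| ^ (-γ)`, `|y_k| ^ (-γ)`. -/
lemma key_homog {p w₁ w₂ v₁ v₂ : ℝ} (hp : 2 ≤ p) (h2 : 0 < w₂) (h12 : w₂ ≤ w₁) :
    (w₁ - w₂) ^ (p - 1) * (w₁ * |v₁| ^ p) + cRem p * ((w₁ * w₂) ^ (p / 2) * |v₁ - v₂| ^ p) ≤
      |w₁ * v₁ - w₂ * v₂| ^ p + (w₁ - w₂) ^ (p - 1) * (w₂ * |v₂| ^ p) := by
  have h1 : 0 < w₁ := h2.trans_le h12
  -- both sides are continuous in `v₂`, so `v₂ ≠ 0` may be assumed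
  have hclosed : IsClosed {v₂ : ℝ | (w₁ - w₂) ^ (p - 1) * (w₁ * |v₁| ^ p) +
      cRem p * ((w₁ * w₂) ^ (p / 2) * |v₁ - v₂| ^ p) ≤
      |w₁ * v₁ - w₂ * v₂| ^ p + (w₁ - w₂) ^ (p - 1) * (w₂ * |v₂| ^ p)} := by
    refine isClosed_le ?_ ?_
    · refine continuous_const.add (continuous_const.mul (continuous_const.mul ?_))
      exact Continuous.rpow_const (by fun_prop) fun _ => Or.inr (by linarith)
    · refine Continuous.add ?_ (continuous_const.mul (continuous_const.mul ?_))
      · exact Continuous.rpow_const (by fun_prop) fun _ => Or.inr (by linarith)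
      · exact Continuous.rpow_const (by fun_prop) fun _ => Or.inr (by linarith)
  have hdense : Dense ({0}ᶜ : Set ℝ) := dense_compl_singleton 0
  suffices H : ({0}ᶜ : Set ℝ) ⊆ _ from
    (hclosed.closure_subset_iff.2 H) (hdense.closure_eq ▸ mem_univ v₂)
  intro w (hw : w ≠ 0)
  simp only [mem_ofPred_eq]
  have hw' : 0 < |w| := abs_pos.2 hw
  have ht : w₂ / w₁ ∈ Icc (0:ℝ) 1 := ⟨by positivity, (div_le_one h1).2 h12⟩
  have key := key_main (a := v₁ / w) hp ht
  have hm : 0 ≤ w₁ - w₂ := by linarith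
  set C : ℝ := (w₁ * |w|) ^ p with hC
  have hCpos : 0 < C := by positivity
  have key2 := mul_le_mul_of_nonneg_left key hCpos.le
  have a1 : (1 - w₂ / w₁) ^ (p - 1) = (w₁ - w₂) ^ (p - 1) / w₁ ^ (p - 1) := by
    rw [← Real.div_rpow hm h1.le]; congr 1; field_simp
  have a2 : |v₁ / w| ^ p = |v₁| ^ p / |w| ^ p := by
    rw [abs_div, Real.div_rpow (abs_nonneg _) (abs_nonneg _)]
  have a3 : |v₁ / w - 1| ^ p = |v₁ - w| ^ p / |w| ^ p := by
    rw [← Real.div_rpow (abs_nonneg _) (abs_nonneg _), ← abs_div]; congr 2; field_simp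
  have a4 : |v₁ / w - w₂ / w₁| ^ p = |w₁ * v₁ - w₂ * w| ^ p / C := by
    rw [hC, ← Real.div_rpow (abs_nonneg _) (by positivity)]
    rw [show w₁ * |w| = |w₁ * w| by rw [abs_mul, abs_of_pos h1], ← abs_div]
    congr 2; field_simp
  have a5 : C = w₁ * w₁ ^ (p - 1) * |w| ^ p := by
    rw [hC, Real.mul_rpow h1.le hw'.le, rpow_split h1.le (by linarith)]
  have a6 : (w₂ / w₁) ^ (p / 2) = (w₁ * w₂) ^ (p / 2) / (w₁ * w₁ ^ (p - 1)) := by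
    rw [← rpow_split h1.le (by linarith), Real.div_rpow h2.le h1.le, Real.mul_rpow h1.le h2.le]
    have : w₁ ^ p = w₁ ^ (p / 2) * w₁ ^ (p / 2) := by rw [← Real.rpow_add h1]; congr 1; ring
    rw [this]
    have : w₁ ^ (p / 2) ≠ 0 := by positivity
    field_simp
  rw [a1, a2, a3, a4, a6, mul_div_cancel₀ _ hCpos.ne', a5] at key2
  have b1 : |w| ^ p ≠ 0 := by positivity
  have b2 : w₁ ^ (p - 1) ≠ 0 := by positivity
  have e : w₁ * w₁ ^ (p - 1) * |w| ^ p *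
      ((w₁ - w₂) ^ (p - 1) / w₁ ^ (p - 1) * (|v₁| ^ p / |w| ^ p - w₂ / w₁) +
        cRem p * ((w₁ * w₂) ^ (p / 2) / (w₁ * w₁ ^ (p - 1))) * (|v₁ - w| ^ p / |w| ^ p)) =
      (w₁ - w₂) ^ (p - 1) * (w₁ * |v₁| ^ p) - (w₁ - w₂) ^ (p - 1) * (w₂ * |w| ^ p) +
        cRem p * ((w₁ * w₂) ^ (p / 2) * |v₁ - w| ^ p) := by
    field_simp
  rw [e] at key2
  linarith

/-- The weight, in terms of `a = |x_k|` and `b = |y_k|`, of the two terms of the pointwise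
inequality which involve only one of the values `u x`, `u y`; restricted to `b / a ∈ S`. -/
def Jw (S : Set ℝ) (p γ α β a b : ℝ) : ENNReal :=
  S.indicator 1 (b / a) *
    ENNReal.ofReal (|a ^ (-γ) - b ^ (-γ)| ^ (p - 1) * (a ^ α * b ^ β + a ^ β * b ^ α))

/-- Truncated sharp constant: the integral defining `C1`, over the set `S`, in terms of `Psi`. -/
def CS (k : ℕ) (S : Set ℝ) (σ p γ α β : ℝ) : ENNReal :=
  ∫⁻ r in S, ENNReal.ofReal (r ^ (σ - 1) * (r ^ (-α) + r ^ (-β)) * |1 - r ^ γ| ^ p) *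
    Psi k (k + σ) 1 r

lemma measurable_Jw {S : Set ℝ} (hS : MeasurableSet S) (p γ α β : ℝ) :
    Measurable fun z : ℝ × ℝ => Jw S p γ α β z.1 z.2 := by
  unfold Jw
  refine Measurable.mul ?_ (Measurable.ennreal_ofReal ?_)
  · exact (measurable_one.indicator hS).comp (measurable_snd.div measurable_fst)
  · refine Measurable.mul (Measurable.pow_const (Measurable.abs (Measurable.sub ?_ ?_)) _)
      (Measurable.add (Measurable.mul ?_ ?_) (Measurable.mul ?_ ?_))
    all_goals first
      | exact measurable_fst.pow_const _
      | exact measurable_snd.pow_const _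

lemma Jw_homog (S : Set ℝ) (p γ α β : ℝ) {l a b : ℝ} (hl : 0 < l) (ha : 0 ≤ a) (hb : 0 ≤ b) :
    Jw S p γ α β (l * a) (l * b) =
      ENNReal.ofReal (l ^ (-γ * (p - 1) + α + β)) * Jw S p γ α β a b := by
  unfold Jw
  rw [mul_div_mul_left _ _ hl.ne', mul_left_comm (ENNReal.ofReal (l ^ _)),
    ← ENNReal.ofReal_mul (by positivity)]
  congr 2
  rw [Real.mul_rpow hl.le ha, Real.mul_rpow hl.le ha, Real.mul_rpow hl.le ha,
    Real.mul_rpow hl.le hb, Real.mul_rpow hl.le hb, Real.mul_rpow hl.le hb, ← mul_sub, abs_mul,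
    Real.mul_rpow (abs_nonneg _) (abs_nonneg _), abs_of_pos (Real.rpow_pos_of_pos hl _),
    ← Real.rpow_mul hl.le, Real.rpow_add hl, Real.rpow_add hl]
  ring

/-- The two linear terms, integrated along the fibres, differ exactly by the truncated sharp constant.
After the inversion `r ↦ r⁻¹` in one of them this is an identity between integrands. -/
lemma w_identity {k : ℕ} {S : Set ℝ} (hk : 1 ≤ k) (hS : MeasurableSet S) {p γ α β σ : ℝ}
    (hp : 2 ≤ p) (hγ : γ * p = k + α + β - σ) (hS0 : ∀ r ∈ S, 0 < r) (hS1 : ∀ r ∈ S, 1 < r ^ γ) :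
    ∫⁻ r in Ioi (0:ℝ), Jw S p γ α β 1 r * ENNReal.ofReal (r ^ (k - 1)) * Psi k (k + σ) 1 r =
      (∫⁻ r in Ioi (0:ℝ), Jw S p γ α β r 1 * ENNReal.ofReal (r ^ (k - 1)) * Psi k (k + σ) 1 r) +
        CS k S σ p γ α β := by
  have hΨ : Measurable (Psi k (k + σ) 1) :=
    measurable_Psi_right k (k + σ) 1
  have hinv : (fun r : ℝ => r⁻¹) '' Ioi (0:ℝ) = Ioi 0 := by
    ext r
    simp only [mem_image, mem_Ioi]
    constructor
    · rintro ⟨a, ha, rfl⟩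
      positivity
    · intro h
      exact ⟨r⁻¹, by positivity, inv_inv r⟩
  have e1 : CS k S σ p γ α β = ∫⁻ r in Ioi (0:ℝ), S.indicator 1 r *
      (ENNReal.ofReal (r ^ (σ - 1) * (r ^ (-α) + r ^ (-β)) * |1 - r ^ γ| ^ p) *
        Psi k (k + σ) 1 r) := by
    rw [CS, ← lintegral_indicator hS, ← lintegral_indicator measurableSet_Ioi]
    refine lintegral_congr fun r => ?_
    by_cases hr : r ∈ S
    · simp [hr, hS0 r hr]
    · by_cases hr' : r ∈ Ioi (0:ℝ) <;> simp [hr, hr']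
  rw [lintegral_inv_Ioi (fun r => Jw S p γ α β r 1 * ENNReal.ofReal (r ^ (k - 1)) *
    Psi k (k + σ) 1 r) measurableSet_Ioi subset_rfl hinv, e1, ← lintegral_add_right]
  · refine setLIntegral_congr_fun measurableSet_Ioi fun r hr => ?_
    have hr0 : 0 < r := hr
    simp only [Jw]
    rw [Psi_inv k _ hr0]
    by_cases hrS : r ∈ S
    · have h1 := hS1 r hrS
      have hb : 0 < r ^ γ := by positivity
      simp only [div_one, one_div, inv_inv, hrS, indicator_of_mem, Pi.one_apply, one_mul,
        Real.one_rpow]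
      simp only [← mul_assoc]
      rw [← add_mul]
      congr 1
      rw [← ENNReal.ofReal_mul (by positivity), ← ENNReal.ofReal_mul (by positivity),
        ← ENNReal.ofReal_mul (by positivity), ← ENNReal.ofReal_mul (by positivity),
        ← ENNReal.ofReal_add (by positivity) (by positivity)]
      congr 1
      have c1 : |1 - r ^ (-γ)| = r ^ (-γ) * (r ^ γ - 1) := by
        rw [mul_sub, ← Real.rpow_add hr0, neg_add_cancel, Real.rpow_zero, mul_one, abs_of_pos]
        rw [sub_pos, Real.rpow_neg hr0.le]
        exact inv_lt_one_of_one_lt₀ h1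
      have c2 : |r⁻¹ ^ (-γ) - 1| = r ^ γ - 1 := by
        rw [Real.inv_rpow hr0.le, Real.rpow_neg hr0.le, inv_inv, abs_of_pos (by linarith)]
      have c3 : |1 - r ^ γ| ^ p = (r ^ γ - 1) * (r ^ γ - 1) ^ (p - 1) := by
        rw [abs_sub_comm, abs_of_pos (by linarith), rpow_split (by linarith) (by linarith)]
      rw [c1, c2, c3, Real.mul_rpow (by positivity) (by linarith), ← Real.rpow_mul hr0.le]
      have d1 : r ^ β = r ^ (α + β) * r ^ (-α) := by rw [← Real.rpow_add hr0]; congr 1; ring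
      have d2 : r ^ α = r ^ (α + β) * r ^ (-β) := by rw [← Real.rpow_add hr0]; congr 1; ring
      have d3 : r⁻¹ ^ α = r ^ (-α) := by rw [Real.inv_rpow hr0.le, Real.rpow_neg hr0.le]
      have d4 : r⁻¹ ^ β = r ^ (-β) := by rw [Real.inv_rpow hr0.le, Real.rpow_neg hr0.le]
      have d5 : r ^ (-γ * (p - 1)) * r ^ (α + β) * r ^ (k - 1) = r ^ γ * r ^ (σ - 1) := by
        rw [← Real.rpow_natCast, ← Real.rpow_add hr0, ← Real.rpow_add hr0, ← Real.rpow_add hr0,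
          Nat.cast_sub hk]
        congr 1; push_cast; linarith
      have d6 : r ^ (-2:ℝ) * r⁻¹ ^ (k - 1) * r ^ ((k:ℝ) + σ) = r ^ (σ - 1) := by
        rw [← Real.rpow_natCast, Real.inv_rpow hr0.le, ← Real.rpow_neg hr0.le,
          ← Real.rpow_add hr0, ← Real.rpow_add hr0, Nat.cast_sub hk]
        congr 1; push_cast; ring
      rw [d3, d4, d1, d2]
      linear_combination (r ^ γ - 1) ^ (p - 1) * (r ^ (-α) + r ^ (-β)) * d5 -
        (r ^ γ - 1) ^ (p - 1) * (r ^ (-α) + r ^ (-β)) * d6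
    · simp [hrS]
  · refine Measurable.mul (measurable_one.indicator hS) (Measurable.mul (Measurable.ennreal_ofReal ?_) hΨ)
    refine Measurable.mul (Measurable.mul (by fun_prop) (Measurable.add ?_ ?_)) ?_ <;> fun_prop

/-! ### The truncated inequality -/

/-- The kernel `|x - y|^(-d-σ)` on `ℝ^d × ℝ^d`, `d = k + m`. -/
def kerN (k m : ℕ) (σ : ℝ) (z : EE (k + m) × EE (k + m)) : ENNReal :=
  ENNReal.ofReal (‖z.1 - z.2‖ ^ (-((k + m : ℕ) : ℝ) - σ))

/-- The density of the weighted Gagliardo energy of `u` with weight exponents `a`, `b`. -/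
def gagl (k m : ℕ) (σ p : ℝ) (u : EE (k + m) → ℝ) (a b : ℝ) (z : EE (k + m) × EE (k + m)) : ℝ :=
  |u z.1 - u z.2| ^ p * ‖z.1 - z.2‖ ^ (-((k + m : ℕ) : ℝ) - σ) *
    ‖fstE k m z.1‖ ^ a * ‖fstE k m z.2‖ ^ b

/-- The Hardy density `|u|^p |x_k|^δ`. -/
def hardyD (k m : ℕ) (p : ℝ) (u : EE (k + m) → ℝ) (δ : ℝ) (x : EE (k + m)) : ENNReal :=
  ENNReal.ofReal (|u x| ^ p * ‖fstE k m x‖ ^ δ)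

lemma measurable_kerN (k m : ℕ) (σ : ℝ) : Measurable (kerN k m σ) :=
  measurable_ofReal_rpow (by fun_prop) _

lemma kerN_swap (k m : ℕ) (σ : ℝ) (x y : EE (k + m)) : kerN k m σ (x, y) = kerN k m σ (y, x) := by
  simp only [kerN, norm_sub_rev x y]

lemma measurable_rho (k m : ℕ) : Measurable fun x : EE (k + m) => ‖fstE k m x‖ :=
  (measurable_fstE k m).norm

lemma measurable_gagl (k m : ℕ) (σ p : ℝ) {u : EE (k + m) → ℝ} (hu : Measurable u) (a b : ℝ) :
    Measurable (gagl k m σ p u a b) := by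
  have h1 : Measurable fun z : EE (k + m) × EE (k + m) => ‖fstE k m z.1‖ :=
    (measurable_rho k m).comp measurable_fst
  have h2 : Measurable fun z : EE (k + m) × EE (k + m) => ‖fstE k m z.2‖ :=
    (measurable_rho k m).comp measurable_snd
  refine Measurable.mul (Measurable.mul (Measurable.mul ?_ ?_) (h1.pow_const _)) (h2.pow_const _)
  · exact Measurable.pow_const (by fun_prop) _
  · exact Measurable.pow_const (by fun_prop) _

lemma gagl_nonneg (k m : ℕ) (σ p : ℝ) (u : EE (k + m) → ℝ) (a b : ℝ) (z) :
    0 ≤ gagl k m σ p u a b z := by unfold gagl; positivity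

lemma Jw_of_notMem {S : Set ℝ} {a b : ℝ} (h : b / a ∉ S) (p γ α β : ℝ) : Jw S p γ α β a b = 0 := by
  simp [Jw, h]

section
variable {k m : ℕ} {σ p γ α β : ℝ} {S : Set ℝ}

/-- Integration of the first linear term over `y`: by homogeneity it is a constant multiple of the
Hardy density at `x`. -/
lemma Jw_int_snd (hk : 1 ≤ k) (hσ : 0 < σ) (hαβ : α + β < σ) (hS : MeasurableSet S)
    (hS0 : ∀ r ∈ S, 0 < r) (u : EE (k + m) → ℝ) (x : EE (k + m)) :
    hardyD k m p u (γ * (p - 1)) x *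
      ∫⁻ y, Jw S p γ α β ‖fstE k m x‖ ‖fstE k m y‖ * kerN k m σ (x, y) =
    ENNReal.ofReal (kap k m σ) * (∫⁻ r in Ioi (0:ℝ), Jw S p γ α β 1 r *
      ENNReal.ofReal (r ^ (k - 1)) * Psi k (k + σ) 1 r) * hardyD k m p u (α + β - σ) x := by
  rcases (norm_nonneg (fstE k m x)).eq_or_lt with h0 | h0
  · have h1 : ∀ b, Jw S p γ α β 0 b = 0 := fun b => Jw_of_notMem (by
      rw [div_zero]; exact fun h => lt_irrefl _ (hS0 0 h)) _ _ _ _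
    have h2 : hardyD k m p u (α + β - σ) x = 0 := by
      rw [hardyD, ← h0, Real.zero_rpow (by linarith)]; simp
    rw [← h0, h2]; simp [h1]
  · set a := ‖fstE k m x‖ with ha
    have hJ : Measurable (Jw S p γ α β a) := by
      have h : Measurable fun r : ℝ => (a, r) := measurable_prodMk_left
      have := (measurable_Jw hS p γ α β).comp h
      simpa only [Function.comp_def] using this
    unfold kerN
    rw [ker_flat_scaled (G := Jw S p γ α β a) hk hσ hJ x rfl h0, ← ha]
    have e : ∫⁻ r in Ioi (0:ℝ), Jw S p γ α β a (a * r) * ENNReal.ofReal (r ^ (k - 1)) *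
        Psi k (k + σ) 1 r = ENNReal.ofReal (a ^ (-γ * (p - 1) + α + β)) *
        ∫⁻ r in Ioi (0:ℝ), Jw S p γ α β 1 r * ENNReal.ofReal (r ^ (k - 1)) *
        Psi k (k + σ) 1 r := by
      rw [← lintegral_const_mul' _ _ ENNReal.ofReal_ne_top]
      refine setLIntegral_congr_fun measurableSet_Ioi fun r hr => ?_
      have h := Jw_homog S p γ α β h0 zero_le_one (le_of_lt hr)
      rw [mul_one] at h
      simp only [h, mul_assoc]
    rw [e, hardyD, hardyD, ← ha]
    have e2 : ENNReal.ofReal (|u x| ^ p * a ^ (α + β - σ)) =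
        ENNReal.ofReal (|u x| ^ p * a ^ (γ * (p - 1))) * ENNReal.ofReal (a ^ (-σ)) *
          ENNReal.ofReal (a ^ (-γ * (p - 1) + α + β)) := by
      rw [← ENNReal.ofReal_mul (by positivity), ← ENNReal.ofReal_mul (by positivity),
        mul_assoc, mul_assoc, ← Real.rpow_add h0, ← Real.rpow_add h0]
      congr 3; ring
    rw [e2]; ring

/-- Integration of the second linear term over `x`: by homogeneity it is a constant multiple of the
Hardy density at `y`. -/
lemma Jw_int_fst (hk : 1 ≤ k) (hσ : 0 < σ) (hαβ : α + β < σ) (hS : MeasurableSet S)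
    (hS0 : ∀ r ∈ S, 0 < r) (u : EE (k + m) → ℝ) (y : EE (k + m)) :
    hardyD k m p u (γ * (p - 1)) y *
      ∫⁻ x, Jw S p γ α β ‖fstE k m x‖ ‖fstE k m y‖ * kerN k m σ (x, y) =
    ENNReal.ofReal (kap k m σ) * (∫⁻ r in Ioi (0:ℝ), Jw S p γ α β r 1 *
      ENNReal.ofReal (r ^ (k - 1)) * Psi k (k + σ) 1 r) * hardyD k m p u (α + β - σ) y := by
  rcases (norm_nonneg (fstE k m y)).eq_or_lt with h0 | h0
  · have h1 : ∀ b, Jw S p γ α β b 0 = 0 := fun b => Jw_of_notMem (by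
      rw [zero_div]; exact fun h => lt_irrefl _ (hS0 0 h)) _ _ _ _
    have h2 : hardyD k m p u (α + β - σ) y = 0 := by
      rw [hardyD, ← h0, Real.zero_rpow (by linarith)]; simp
    rw [← h0, h2]; simp [h1]
  · set a := ‖fstE k m y‖ with ha
    have hJ : Measurable (fun b => Jw S p γ α β b a) := by
      have h : Measurable fun r : ℝ => (r, a) := measurable_prodMk_right
      have := (measurable_Jw hS p γ α β).comp h
      simpa only [Function.comp_def] using this
    simp_rw [fun x => kerN_swap k m σ x y]
    unfold kerN
    rw [ker_flat_scaled (G := fun b => Jw S p γ α β b a) hk hσ hJ y rfl h0, ← ha]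
    have e : ∫⁻ r in Ioi (0:ℝ), Jw S p γ α β (a * r) a * ENNReal.ofReal (r ^ (k - 1)) *
        Psi k (k + σ) 1 r = ENNReal.ofReal (a ^ (-γ * (p - 1) + α + β)) *
        ∫⁻ r in Ioi (0:ℝ), Jw S p γ α β r 1 * ENNReal.ofReal (r ^ (k - 1)) *
        Psi k (k + σ) 1 r := by
      rw [← lintegral_const_mul' _ _ ENNReal.ofReal_ne_top]
      refine setLIntegral_congr_fun measurableSet_Ioi fun r hr => ?_
      have h := Jw_homog S p γ α β h0 (le_of_lt hr) zero_le_one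
      rw [mul_one] at h
      simp only [h, mul_assoc]
    rw [e, hardyD, hardyD, ← ha]
    have e2 : ENNReal.ofReal (|u y| ^ p * a ^ (α + β - σ)) =
        ENNReal.ofReal (|u y| ^ p * a ^ (γ * (p - 1))) * ENNReal.ofReal (a ^ (-σ)) *
          ENNReal.ofReal (a ^ (-γ * (p - 1) + α + β)) := by
      rw [← ENNReal.ofReal_mul (by positivity), ← ENNReal.ofReal_mul (by positivity),
        mul_assoc, mul_assoc, ← Real.rpow_add h0, ← Real.rpow_add h0]
      congr 3; ring
    rw [e2]; ring

/-- Pairs `(x, y)` with `|y_k| / |x_k| ∈ S`. -/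
def pairSet (k m : ℕ) (S : Set ℝ) : Set (EE (k + m) × EE (k + m)) :=
  {z | ‖fstE k m z.2‖ / ‖fstE k m z.1‖ ∈ S}

lemma measurableSet_pairSet (hS : MeasurableSet S) : MeasurableSet (pairSet k m S) :=
  (((measurable_rho k m).comp measurable_snd).div ((measurable_rho k m).comp measurable_fst)) hS

lemma pos_of_mem_pairSet (hS0 : ∀ r ∈ S, 0 < r) {z : EE (k + m) × EE (k + m)}
    (hz : z ∈ pairSet k m S) : 0 < ‖fstE k m z.1‖ ∧ 0 < ‖fstE k m z.2‖ := by
  have h := hS0 _ hz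
  constructor
  · rcases (norm_nonneg (fstE k m z.1)).eq_or_lt with h0 | h0
    · rw [← h0, div_zero] at h; exact absurd h (lt_irrefl _)
    · exact h0
  · rcases (norm_nonneg (fstE k m z.2)).eq_or_lt with h0 | h0
    · rw [← h0, zero_div] at h; exact absurd h (lt_irrefl _)
    · exact h0

/-- The pointwise inequality, multiplied by the symmetrized kernel. -/
lemma pointwise_pair (hp : 2 ≤ p) (hγ : γ * p = k + α + β - σ)
    (hS0 : ∀ r ∈ S, 0 < r) (hS1 : ∀ r ∈ S, 1 < r ^ γ) {u v : EE (k + m) → ℝ}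
    (hv : ∀ x, v x = ‖fstE k m x‖ ^ γ * u x) {z : EE (k + m) × EE (k + m)}
    (hz : z ∈ pairSet k m S) :
    hardyD k m p u (γ * (p - 1)) z.1 *
        (Jw S p γ α β ‖fstE k m z.1‖ ‖fstE k m z.2‖ * kerN k m σ z) +
      ENNReal.ofReal (cRem p) *
        (ENNReal.ofReal (gagl k m σ p v (-((k - α + β - σ) / 2)) (-((k + α - β - σ) / 2)) z) +
        ENNReal.ofReal (gagl k m σ p v (-((k - α + β - σ) / 2)) (-((k + α - β - σ) / 2)) z.swap)) ≤
    (ENNReal.ofReal (gagl k m σ p u α β z) + ENNReal.ofReal (gagl k m σ p u α β z.swap)) +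
      hardyD k m p u (γ * (p - 1)) z.2 *
        (Jw S p γ α β ‖fstE k m z.1‖ ‖fstE k m z.2‖ * kerN k m σ z) := by
  obtain ⟨x, y⟩ := z
  obtain ⟨ha, hb⟩ := pos_of_mem_pairSet hS0 hz
  have hrat := hS1 _ hz
  have hmem : ‖fstE k m y‖ / ‖fstE k m x‖ ∈ S := hz
  simp only [Prod.swap_prod_mk] at *
  have hvx := hv x
  have hvy := hv y
  have hc := cRem_nonneg hp
  simp only [Jw, kerN, hardyD, gagl, norm_sub_rev y x, abs_sub_comm (v y) (v x),
    abs_sub_comm (u y) (u x), indicator_of_mem hmem, Pi.one_apply, one_mul]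
  set a := ‖fstE k m x‖
  set b := ‖fstE k m y‖
  set N := ‖x - y‖ ^ (-((k + m : ℕ) : ℝ) - σ)
  have hN : 0 ≤ N := by positivity
  have hle : b ^ (-γ) ≤ a ^ (-γ) := by
    rw [Real.rpow_neg ha.le, Real.rpow_neg hb.le]
    rw [Real.div_rpow hb.le ha.le, one_lt_div (by positivity)] at hrat
    exact inv_anti₀ (by positivity) hrat.le
  have key := key_homog (v₁ := v x) (v₂ := v y) hp (Real.rpow_pos_of_pos hb (-γ)) hle
  have ex : a ^ (-γ) * v x = u x := by
    rw [hvx, ← mul_assoc, ← Real.rpow_add ha]; simp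
  have ey : b ^ (-γ) * v y = u y := by
    rw [hvy, ← mul_assoc, ← Real.rpow_add hb]; simp
  have fx : a ^ (-γ) * |v x| ^ p = |u x| ^ p * a ^ (γ * (p - 1)) := by
    rw [hvx, abs_mul, abs_of_pos (Real.rpow_pos_of_pos ha γ), Real.mul_rpow (by positivity)
      (abs_nonneg _), ← Real.rpow_mul ha.le, ← mul_assoc, ← Real.rpow_add ha, mul_comm]
    congr 2; ring
  have fy : b ^ (-γ) * |v y| ^ p = |u y| ^ p * b ^ (γ * (p - 1)) := by
    rw [hvy, abs_mul, abs_of_pos (Real.rpow_pos_of_pos hb γ), Real.mul_rpow (by positivity)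
      (abs_nonneg _), ← Real.rpow_mul hb.le, ← mul_assoc, ← Real.rpow_add hb, mul_comm]
    congr 2; ring
  rw [ex, ey, fx, fy, Real.mul_rpow (by positivity) (by positivity), ← Real.rpow_mul ha.le,
    ← Real.rpow_mul hb.le] at key
  rw [abs_of_nonneg (sub_nonneg.2 hle)]
  set D := (a ^ (-γ) - b ^ (-γ)) ^ (p - 1)
  have hD : 0 ≤ D := Real.rpow_nonneg (sub_nonneg.2 hle) _
  rw [← ENNReal.ofReal_add (by positivity) (by positivity),
    ← ENNReal.ofReal_add (by positivity) (by positivity),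
    ← ENNReal.ofReal_mul (by positivity), ← ENNReal.ofReal_mul (by positivity),
    ← ENNReal.ofReal_mul (by positivity), ← ENNReal.ofReal_mul (by positivity),
    ← ENNReal.ofReal_add (by positivity) (by positivity),
    ← ENNReal.ofReal_add (by positivity) (by positivity)]
  refine ENNReal.ofReal_le_ofReal ?_
  have hK : 0 ≤ N * (a ^ α * b ^ β + a ^ β * b ^ α) := by positivity
  have k2 := mul_le_mul_of_nonneg_right key hK
  have g1 : ∀ t : ℝ, 0 < t → t ^ (-γ * (p / 2)) * t ^ α = t ^ (-(((k:ℝ) - α + β - σ) / 2)) := by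
    intro t ht; rw [← Real.rpow_add ht]; congr 1; linarith
  have g2 : ∀ t : ℝ, 0 < t → t ^ (-γ * (p / 2)) * t ^ β = t ^ (-(((k:ℝ) + α - β - σ) / 2)) := by
    intro t ht; rw [← Real.rpow_add ht]; congr 1; linarith
  rw [← g1 a ha, ← g1 b hb, ← g2 a ha, ← g2 b hb]
  linarith

lemma Jw_kerN_measurable (hS : MeasurableSet S) :
    Measurable fun z : EE (k + m) × EE (k + m) =>
      Jw S p γ α β ‖fstE k m z.1‖ ‖fstE k m z.2‖ * kerN k m σ z := by
  refine Measurable.mul ?_ (measurable_kerN k m σ)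
  have h : Measurable fun z : EE (k + m) × EE (k + m) => (‖fstE k m z.1‖, ‖fstE k m z.2‖) :=
    ((measurable_rho k m).comp measurable_fst).prodMk ((measurable_rho k m).comp measurable_snd)
  exact (measurable_Jw hS p γ α β).comp h

lemma hardyD_measurable {u : EE (k + m) → ℝ} (hu : Measurable u) (δ : ℝ) :
    Measurable (hardyD k m p u δ) :=
  (Measurable.mul (Measurable.pow_const (by fun_prop) _)
    ((measurable_rho k m).pow_const _)).ennreal_ofReal

/-- The Hardy inequality with remainder, restricted to pairs with `|y_k| / |x_k| ∈ S`. Both linear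
terms contain the constant `w₂`; its finiteness `hw` permits cancelling the smaller one. -/
lemma trunc_ineq (hk : 1 ≤ k) (hσ : 0 < σ) (hp : 2 ≤ p) (hγ : γ * p = k + α + β - σ)
    (hαβ : α + β < σ) (hS : MeasurableSet S)
    (hS0 : ∀ r ∈ S, 0 < r) (hS1 : ∀ r ∈ S, 1 < r ^ γ) {u v : EE (k + m) → ℝ}
    (hum : Measurable u) (hv : ∀ x, v x = ‖fstE k m x‖ ^ γ * u x)
    (hH : ∫⁻ x, hardyD k m p u (α + β - σ) x ≠ ⊤)
    (hw : ∫⁻ r in Ioi (0:ℝ), Jw S p γ α β r 1 *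
      ENNReal.ofReal (r ^ (k - 1)) * Psi k (k + σ) 1 r ≠ ⊤) :
    ENNReal.ofReal (kap k m σ) * CS k S σ p γ α β * (∫⁻ x, hardyD k m p u (α + β - σ) x) +
      ENNReal.ofReal (cRem p) * ∫⁻ z in pairSet k m S,
        (ENNReal.ofReal (gagl k m σ p v (-((k - α + β - σ) / 2)) (-((k + α - β - σ) / 2)) z) +
        ENNReal.ofReal (gagl k m σ p v (-((k - α + β - σ) / 2)) (-((k + α - β - σ) / 2)) z.swap)) ≤
    ∫⁻ z in pairSet k m S,
      (ENNReal.ofReal (gagl k m σ p u α β z) + ENNReal.ofReal (gagl k m σ p u α β z.swap)) := by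
  have hA : MeasurableSet (pairSet k m S) := measurableSet_pairSet hS
  have hJN := Jw_kerN_measurable (k := k) (m := m) (σ := σ) (p := p) (γ := γ) (α := α) (β := β) hS
  have hD := hardyD_measurable (k := k) (m := m) (p := p) hum (γ * (p - 1))
  set JN : EE (k + m) × EE (k + m) → ENNReal := fun z =>
    Jw S p γ α β ‖fstE k m z.1‖ ‖fstE k m z.2‖ * kerN k m σ z with hJNd
  set w₂ := ∫⁻ r in Ioi (0:ℝ), Jw S p γ α β r 1 *
      ENNReal.ofReal (r ^ (k - 1)) * Psi k (k + σ) 1 r with hw2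
  set H := ∫⁻ x, hardyD k m p u (α + β - σ) x with hHd
  have hm1 : Measurable fun z : EE (k + m) × EE (k + m) =>
      hardyD k m p u (γ * (p - 1)) z.1 * JN z := (hD.comp measurable_fst).mul hJN
  have hm2 : Measurable fun z : EE (k + m) × EE (k + m) =>
      hardyD k m p u (γ * (p - 1)) z.2 * JN z := (hD.comp measurable_snd).mul hJN
  have hoff : ∀ F : EE (k + m) × EE (k + m) → ENNReal,
      ∫⁻ z in pairSet k m S, F z * JN z = ∫⁻ z, F z * JN z := by
    intro F
    rw [← lintegral_indicator hA]
    refine lintegral_congr fun z => ?_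
    by_cases hz : z ∈ pairSet k m S
    · rw [indicator_of_mem hz]
    · rw [indicator_of_notMem hz, hJNd]
      have : ‖fstE k m z.2‖ / ‖fstE k m z.1‖ ∉ S := hz
      simp [Jw_of_notMem this]
  have i1 : ∫⁻ z in pairSet k m S, hardyD k m p u (γ * (p - 1)) z.1 * JN z =
      ENNReal.ofReal (kap k m σ) * (w₂ + CS k S σ p γ α β) * H := by
    rw [hoff, Measure.volume_eq_prod, lintegral_prod _ hm1.aemeasurable, hw2,
      ← w_identity hk hS hp hγ hS0 hS1, hHd, ← lintegral_const_mul _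
        (hardyD_measurable hum (α + β - σ))]
    refine lintegral_congr fun x => ?_
    rw [← Jw_int_snd (γ := γ) hk hσ hαβ hS hS0 u x]
    exact lintegral_const_mul' (hardyD k m p u (γ * (p - 1)) x) (fun y => JN (x, y)) ENNReal.ofReal_ne_top
  have i2 : ∫⁻ z in pairSet k m S, hardyD k m p u (γ * (p - 1)) z.2 * JN z =
      ENNReal.ofReal (kap k m σ) * w₂ * H := by
    rw [hoff, Measure.volume_eq_prod, lintegral_prod_symm _ hm2.aemeasurable, hw2, hHd, ← lintegral_const_mul _
        (hardyD_measurable hum (α + β - σ))]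
    refine lintegral_congr fun y => ?_
    rw [← Jw_int_fst (γ := γ) hk hσ hαβ hS hS0 u y]
    exact lintegral_const_mul' (hardyD k m p u (γ * (p - 1)) y) (fun x => JN (x, y)) ENNReal.ofReal_ne_top
  have hg := (measurable_gagl k m σ p hum α β).ennreal_ofReal
  have main : (∫⁻ z in pairSet k m S, (hardyD k m p u (γ * (p - 1)) z.1 * JN z +
      ENNReal.ofReal (cRem p) *
        (ENNReal.ofReal (gagl k m σ p v (-((k - α + β - σ) / 2)) (-((k + α - β - σ) / 2)) z) +
        ENNReal.ofReal (gagl k m σ p v (-((k - α + β - σ) / 2)) (-((k + α - β - σ) / 2)) z.swap)))) ≤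
      ∫⁻ z in pairSet k m S,
        ((ENNReal.ofReal (gagl k m σ p u α β z) + ENNReal.ofReal (gagl k m σ p u α β z.swap)) +
          hardyD k m p u (γ * (p - 1)) z.2 * JN z) :=
    setLIntegral_mono_ae ((hg.add (hg.comp measurable_swap)).add hm2).aemeasurable
      (Eventually.of_forall fun z hz => pointwise_pair (σ := σ) hp hγ hS0 hS1 hv hz)
  rw [lintegral_add_left hm1, lintegral_add_right _ hm2,
    lintegral_const_mul' _ _ ENNReal.ofReal_ne_top, i1, i2] at main
  have hfin : ENNReal.ofReal (kap k m σ) * w₂ * H ≠ ⊤ :=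
    ENNReal.mul_ne_top (ENNReal.mul_ne_top ENNReal.ofReal_ne_top hw) hH
  refine (ENNReal.add_le_add_iff_right hfin).1 (le_trans (le_of_eq ?_) main)
  ring

end

/-! ### Removing the truncation -/

section
variable {k m : ℕ} {σ p γ α β : ℝ} {S : Set ℝ}

/-- The inversion `r ↦ 1/r` preserves the integral defining the sharp constant. -/
lemma CS_inv (hγ : γ * p = k + α + β - σ) :
    CS k (Ioi 1) σ p γ α β = CS k (Ioo 0 1) σ p γ α β := by
  have hB : (fun r : ℝ => r⁻¹) '' Ioo (0:ℝ) 1 = Ioi 1 := by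
    ext r
    simp only [mem_image, mem_Ioo, mem_Ioi]
    constructor
    · rintro ⟨a, ⟨h0, h1⟩, rfl⟩
      exact (one_lt_inv₀ h0).2 h1
    · intro h
      exact ⟨r⁻¹, ⟨by positivity, inv_lt_one_of_one_lt₀ h⟩, inv_inv r⟩
  unfold CS
  rw [lintegral_inv_Ioi _ measurableSet_Ioo (fun r hr => hr.1) hB]
  refine setLIntegral_congr_fun measurableSet_Ioo fun r hr => ?_
  have h0 : 0 < r := hr.1
  simp only [Psi_inv k _ h0]
  rw [← mul_assoc, ← mul_assoc, ← ENNReal.ofReal_mul (by positivity),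
    ← ENNReal.ofReal_mul (by positivity)]
  congr 2
  have e1 : |1 - r⁻¹ ^ γ| ^ p = r ^ (-(γ * p)) * |1 - r ^ γ| ^ p := by
    rw [← neg_mul, Real.rpow_mul h0.le, ← Real.mul_rpow (by positivity) (abs_nonneg _),
      abs_sub_comm 1 (r ^ γ)]
    congr 1
    rw [Real.inv_rpow h0.le, ← Real.rpow_neg h0.le]
    nth_rewrite 2 [← abs_of_pos (Real.rpow_pos_of_pos h0 (-γ))]
    rw [← abs_mul, mul_sub, ← Real.rpow_add h0]
    simp
  have e2 : ∀ t : ℝ, r⁻¹ ^ t = r ^ (-t) := fun t => by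
    rw [Real.inv_rpow h0.le, ← Real.rpow_neg h0.le]
  rw [e1, e2, e2, e2, hγ]
  have e3 : r ^ (-2 : ℝ) * (r ^ (-(σ - 1)) * (r ^ (- -α) + r ^ (- -β)) *
      (r ^ (-(k + α + β - σ)) * |1 - r ^ γ| ^ p)) * r ^ (k + σ) =
      (r ^ (-2 : ℝ) * r ^ (-(σ - 1)) * r ^ (-(k + α + β - σ)) * r ^ (k + σ) * r ^ (- -α) +
       r ^ (-2 : ℝ) * r ^ (-(σ - 1)) * r ^ (-(k + α + β - σ)) * r ^ (k + σ) * r ^ (- -β)) *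
        |1 - r ^ γ| ^ p := by ring
  rw [e3]
  simp only [← Real.rpow_add h0, mul_add]
  rw [add_comm]
  congr 3 <;> ring

/-- The full range of ratios `r` with `r^γ > 1`. -/
def fullS (γ : ℝ) : Set ℝ := {r | 0 < r ∧ 1 < r ^ γ}

/-- For either sign of `γ ≠ 0` the range `fullS γ` gives the constant over `(0, 1)`: it is `(0, 1)`
for `γ < 0` and `(1, ∞)` for `γ > 0`. -/
lemma CS_fullS (hγ : γ * p = k + α + β - σ) (h0 : γ ≠ 0) :
    CS k (fullS γ) σ p γ α β = CS k (Ioo 0 1) σ p γ α β := by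
  rcases lt_or_gt_of_ne h0 with h | h
  · have : fullS γ = Ioo 0 1 := by
      ext r
      simp only [fullS, mem_ofPred_eq, mem_Ioo, and_congr_right_iff]
      intro hr
      rw [Real.one_lt_rpow_iff_of_pos hr]
      constructor
      · rintro (⟨_, h2⟩ | ⟨h1, _⟩)
        · linarith
        · exact h1
      · exact fun h1 => Or.inr ⟨h1, h⟩
    rw [this]
  · have : fullS γ = Ioi 1 := by
      ext r
      simp only [fullS, mem_ofPred_eq, mem_Ioi]
      constructor
      · rintro ⟨hr, h1⟩
        rcases (Real.one_lt_rpow_iff_of_pos hr).1 h1 with ⟨h1, _⟩ | ⟨_, h2⟩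
        · exact h1
        · linarith
      · intro h1
        exact ⟨by linarith, Real.one_lt_rpow h1 h⟩
    rw [this, CS_inv hγ]

/-- The constant `C1`, defined with `Phi`, is bounded by the integral `CS` with `Psi`. -/
lemma C1_le_CS {s : ℝ} (hk : 1 ≤ k) (hγ : γ = (k + α + β - s * p) / p) :
    ENNReal.ofReal (C1 k s p α β) ≤ CS k (Ioo 0 1) (s * p) p γ α β := by
  have hnn : ∀ r ∈ Ioo (0:ℝ) 1, 0 ≤ Phi k s p r := by
    intro r hr
    have h0 := hr.1
    have h1 : 0 < 1 - r := by linarith [hr.2]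
    unfold Phi
    split_ifs
    · positivity
    · refine mul_nonneg (sphereVol_pos _).le (setIntegral_nonneg measurableSet_Icc fun t ht => ?_)
      have h2 : 0 ≤ 1 - t ^ 2 := by nlinarith [ht.1, ht.2]
      have h3 : 0 ≤ 1 - 2 * t * r + r ^ 2 := by nlinarith [ht.1, ht.2, sq_nonneg (t - r)]
      positivity
  unfold C1 CS
  refine (ofReal_integral_le ?_).trans ?_
  · refine (ae_restrict_iff' measurableSet_Ioo).2 (Eventually.of_forall fun r hr => ?_)
    have h0 := hr.1
    have := hnn r hr
    positivity
  · refine setLIntegral_mono' measurableSet_Ioo fun r hr => ?_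
    have h0 := hr.1
    rw [ENNReal.ofReal_mul (by positivity), hγ]
    gcongr
    exact Phi_le_Psi hk hr

lemma Psi_ne_top {q r : ℝ} (hq : 0 < q) (hr : 0 < r) (h1 : r ≠ 1) : Psi k q 1 r ≠ ⊤ := by
  obtain ⟨M, hM, hb⟩ := Psi_bound (k := k) hq
  have key : ∀ r ∈ Ioo (0:ℝ) 1, Psi k q 1 r ≠ ⊤ := fun r hr =>
    ne_top_of_le_ne_top (ENNReal.mul_ne_top hM ENNReal.ofReal_ne_top) (hb r hr)
  rcases lt_or_gt_of_ne h1 with h | h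
  · exact key r ⟨hr, h⟩
  · have := Psi_inv k q (r := r⁻¹) (by positivity)
    rw [inv_inv] at this
    rw [this]
    exact ENNReal.mul_ne_top ENNReal.ofReal_ne_top
      (key _ ⟨by positivity, inv_lt_one_of_one_lt₀ h⟩)

/-- The weight whose integral over `r` must be finite for the truncated inequality. -/
def truncW (k : ℕ) (σ p γ α β r : ℝ) : ENNReal :=
  ENNReal.ofReal (|r ^ (-γ) - 1 ^ (-γ)| ^ (p - 1) * (r ^ α * 1 ^ β + r ^ β * 1 ^ α)) *
    ENNReal.ofReal (r ^ (k - 1)) * Psi k (k + σ) 1 r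

lemma measurable_truncW (k : ℕ) (σ p γ α β : ℝ) : Measurable (truncW k σ p γ α β) := by
  unfold truncW
  refine Measurable.mul (Measurable.mul (Measurable.ennreal_ofReal ?_) (by fun_prop))
    (measurable_Psi_right _ _ _)
  refine Measurable.mul (Measurable.pow_const (Measurable.abs (Measurable.sub ?_ ?_)) _)
      (Measurable.add (Measurable.mul ?_ ?_) (Measurable.mul ?_ ?_))
  all_goals first
    | exact measurable_const
    | exact measurable_id.pow_const _

/-- Truncations exhausting `fullS γ`. On the `n`-th one `1 / r` and the weight `truncW` at `1 / r`
are at most `n`, which keeps away from `r = 1` as far as needed for `truncS_finite`. -/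
def truncS (k : ℕ) (σ p γ α β : ℝ) (n : ℕ) : Set ℝ :=
  {r | r ∈ fullS γ ∧ r⁻¹ ≤ n ∧ truncW k σ p γ α β r⁻¹ ≤ n}

lemma measurableSet_fullS (γ : ℝ) : MeasurableSet (fullS γ) := by
  refine MeasurableSet.inter (measurableSet_Ioi (a := (0:ℝ))) ?_
  exact measurableSet_lt measurable_const (measurable_id.pow_const γ)

lemma measurableSet_truncS (k : ℕ) (σ p γ α β : ℝ) (n : ℕ) :
    MeasurableSet (truncS k σ p γ α β n) := by
  refine (measurableSet_fullS γ).inter (MeasurableSet.inter ?_ ?_)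
  · exact measurableSet_le measurable_inv measurable_const
  · exact measurableSet_le ((measurable_truncW k σ p γ α β).comp measurable_inv) measurable_const

lemma truncS_mono (k : ℕ) (σ p γ α β : ℝ) : Monotone (truncS k σ p γ α β) := by
  rintro n n' h r ⟨h1, h2, h3⟩
  exact ⟨h1, h2.trans (by exact_mod_cast h), h3.trans (by exact_mod_cast h)⟩

lemma iUnion_truncS (hσ : 0 < σ) : ⋃ n, truncS k σ p γ α β n = fullS γ := by
  ext r
  simp only [mem_iUnion]
  refine ⟨fun ⟨n, hn⟩ => hn.1, fun h => ?_⟩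
  have h0 : 0 < r := h.1
  have hne : r ≠ 1 := fun h1 => by
    have := h.2; rw [h1, Real.one_rpow] at this; exact lt_irrefl _ this
  have hfin : truncW k σ p γ α β r⁻¹ ≠ ⊤ := by
    refine ENNReal.mul_ne_top (ENNReal.mul_ne_top ENNReal.ofReal_ne_top ENNReal.ofReal_ne_top)
      (Psi_ne_top (by positivity) (by positivity) ?_)
    simpa using hne
  obtain ⟨n1, hn1⟩ := ENNReal.exists_nat_gt hfin
  obtain ⟨n2, hn2⟩ := exists_nat_ge r⁻¹
  refine ⟨max n1 n2, h, hn2.trans (by exact_mod_cast le_max_right _ _), hn1.le.trans ?_⟩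
  exact_mod_cast le_max_left _ _

lemma truncS_finite (n : ℕ) : ∫⁻ r in Ioi (0:ℝ), Jw (truncS k σ p γ α β n) p γ α β r 1 *
      ENNReal.ofReal (r ^ (k - 1)) * Psi k (k + σ) 1 r ≠ ⊤ := by
  have hle : ∫⁻ r in Ioi (0:ℝ), Jw (truncS k σ p γ α β n) p γ α β r 1 *
      ENNReal.ofReal (r ^ (k - 1)) * Psi k (k + σ) 1 r ≤
      ∫⁻ r in Ioi (0:ℝ), (Iic (n:ℝ)).indicator (fun _ => (n:ENNReal)) r := by
    refine setLIntegral_mono' measurableSet_Ioi fun r hr => ?_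
    by_cases h : (1 / r) ∈ truncS k σ p γ α β n
    · obtain ⟨-, h2, h3⟩ := h
      rw [one_div, inv_inv] at h2 h3
      rw [indicator_of_mem (show r ∈ Iic (n:ℝ) from h2)]
      refine le_trans ?_ h3
      unfold Jw truncW
      gcongr
      refine mul_le_of_le_one_left' ?_
      exact indicator_le_self' (fun _ _ => bot_le) _
    · rw [Jw_of_notMem h]; simp
  refine ne_top_of_le_ne_top ?_ hle
  rw [← lintegral_indicator measurableSet_Ioi]
  have : ∀ r : ℝ, (Ioi (0:ℝ)).indicator ((Iic (n:ℝ)).indicator (fun _ => (n:ENNReal))) r =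
      (Ioc (0:ℝ) n).indicator (fun _ => (n:ENNReal)) r := fun r => by
    rw [indicator_indicator]; rfl
  simp_rw [this]
  rw [lintegral_indicator measurableSet_Ioc, setLIntegral_const]
  exact ENNReal.mul_ne_top (ENNReal.natCast_ne_top n) (by simp)

lemma rho_level_null (hk : 1 ≤ k) (c : ℝ) :
    (volume : Measure (EE (k + m))) {y | ‖fstE k m y‖ = c} = 0 := by
  have : Nonempty (Fin k) := ⟨⟨0, hk⟩⟩
  have h := (split_measurePreserving k m).measure_preimage
    (s := Metric.sphere (0 : EE k) c ×ˢ univ)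
    ((Metric.isClosed_sphere.measurableSet.prod MeasurableSet.univ).nullMeasurableSet)
  have e : (fun x => (fstE k m x, sndE k m x)) ⁻¹' (Metric.sphere (0 : EE k) c ×ˢ univ) =
      {y | ‖fstE k m y‖ = c} := by
    ext y; simp
  rw [e] at h
  rw [h, Measure.prod_prod, Measure.addHaar_sphere, zero_mul]

/-- Almost every pair lies, up to swapping, in `pairSet k m (fullS γ)`. -/
lemma ae_pairSet (hk : 1 ≤ k) (h0 : γ ≠ 0) :
    (pairSet k m (fullS γ) ∪ Prod.swap ⁻¹' pairSet k m (fullS γ) : Set _) =ᵐ[volume] univ := by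
  have n1 : ∀ᵐ x : EE (k + m), ‖fstE k m x‖ ≠ 0 := by
    rw [ae_iff]; simpa using rho_level_null (m := m) hk 0
  have q1 : ∀ᵐ z : EE (k + m) × EE (k + m), ‖fstE k m z.1‖ ≠ 0 :=
    Measure.quasiMeasurePreserving_fst.ae n1
  have q2 : ∀ᵐ z : EE (k + m) × EE (k + m), ‖fstE k m z.2‖ ≠ 0 :=
    Measure.quasiMeasurePreserving_snd.ae n1
  have q3 : ∀ᵐ z : EE (k + m) × EE (k + m), ‖fstE k m z.2‖ ≠ ‖fstE k m z.1‖ := by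
    rw [ae_iff, Measure.volume_eq_prod]
    simp only [ne_eq, not_not]
    rw [Measure.measure_prod_null]
    · exact Eventually.of_forall fun x => rho_level_null (m := m) hk ‖fstE k m x‖
    · exact measurableSet_eq_fun ((measurable_rho k m).comp measurable_snd)
        ((measurable_rho k m).comp measurable_fst)
  rw [ae_eq_univ, ← compl_mem_ae_iff, compl_compl]
  filter_upwards [q1, q2, q3] with z h1 h2 h3
  have h1 : 0 < ‖fstE k m z.1‖ := lt_of_le_of_ne (norm_nonneg _) h1.symm
  have h2 : 0 < ‖fstE k m z.2‖ := lt_of_le_of_ne (norm_nonneg _) h2.symm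
  simp only [mem_union, mem_preimage, pairSet, fullS, mem_ofPred_eq, Prod.fst_swap, Prod.snd_swap]
  have p1 := div_pos h2 h1
  have p2 := div_pos h1 h2
  rw [Real.one_lt_rpow_iff_of_pos p1, Real.one_lt_rpow_iff_of_pos p2, one_lt_div h1, one_lt_div h2,
    div_lt_one h1, div_lt_one h2]
  rcases lt_or_gt_of_ne h3 with h | h <;> rcases lt_or_gt_of_ne h0 with h' | h' <;> tauto

lemma pairSet_disjoint : Disjoint (pairSet k m (fullS γ)) (Prod.swap ⁻¹' pairSet k m (fullS γ)) := by
  rw [Set.disjoint_left]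
  rintro z ⟨h1, h2⟩ ⟨h3, h4⟩
  simp only [Prod.fst_swap, Prod.snd_swap] at h3 h4
  rw [← inv_div, Real.inv_rpow h1.le] at h4
  exact lt_asymm h4 (inv_lt_one_of_one_lt₀ h2)

/-- Symmetrization: pairs in `A` and their swaps together exhaust `A ∪ swap⁻¹ A`. -/
lemma lintegral_symm_union {A : Set (EE (k + m) × EE (k + m))} (hA : MeasurableSet A)
    (hd : Disjoint A (Prod.swap ⁻¹' A)) {g : EE (k + m) × EE (k + m) → ENNReal}
    (hg : Measurable g) : ∫⁻ z in A, (g z + g z.swap) = ∫⁻ z in A ∪ Prod.swap ⁻¹' A, g z := by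
  rw [lintegral_union (measurable_swap hA) hd, lintegral_add_left hg]
  congr 1
  have h := (Measure.measurePreserving_swap (μ := (volume : Measure (EE (k + m))))
    (ν := (volume : Measure (EE (k + m))))).setLIntegral_comp_preimage (measurable_swap hA) hg
  rw [← preimage_comp, Prod.swap_swap_eq, preimage_id] at h
  exact h

/-- The Hardy inequality with remainder for lower Lebesgue integrals, obtained from `trunc_ineq` on
the sets `truncS` by monotone convergence. -/
lemma lintegral_ineq (hk : 1 ≤ k) (hσ : 0 < σ) (hp : 2 ≤ p) (hγ : γ * p = k + α + β - σ)
    (h0 : γ ≠ 0) (hαβ : α + β < σ) {u v : EE (k + m) → ℝ}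
    (hum : Measurable u) (hv : ∀ x, v x = ‖fstE k m x‖ ^ γ * u x)
    (hH : ∫⁻ x, hardyD k m p u (α + β - σ) x ≠ ⊤) :
    ENNReal.ofReal (kap k m σ) * CS k (Ioo 0 1) σ p γ α β *
        (∫⁻ x, hardyD k m p u (α + β - σ) x) +
      ENNReal.ofReal (cRem p) *
        ∫⁻ z, ENNReal.ofReal (gagl k m σ p v (-((k - α + β - σ) / 2)) (-((k + α - β - σ) / 2)) z) ≤
    ∫⁻ z, ENNReal.ofReal (gagl k m σ p u α β z) := by
  have hvm : Measurable v := by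
    rw [funext hv]; exact ((measurable_rho k m).pow_const _).mul hum
  have hgu := (measurable_gagl k m σ p hum α β).ennreal_ofReal
  have hgv := (measurable_gagl k m σ p hvm (-((k - α + β - σ) / 2))
    (-((k + α - β - σ) / 2))).ennreal_ofReal
  set gv := gagl k m σ p v (-((k - α + β - σ) / 2)) (-((k + α - β - σ) / 2)) with hgvd
  set T := truncS k σ p γ α β with hT
  have hmono : Monotone fun n => pairSet k m (T n) := fun n n' h z hz =>
    truncS_mono k σ p γ α β h hz
  have hTm : ∀ n, MeasurableSet (T n) := measurableSet_truncS k σ p γ α β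
  have hU : ⋃ n, T n = fullS γ := iUnion_truncS hσ
  have hUp : ⋃ n, pairSet k m (T n) = pairSet k m (fullS γ) := by
    rw [← hU]; ext z; simp [pairSet]
  have step : ∀ n, ENNReal.ofReal (kap k m σ) * CS k (T n) σ p γ α β *
        (∫⁻ x, hardyD k m p u (α + β - σ) x) +
      ENNReal.ofReal (cRem p) * ∫⁻ z in pairSet k m (T n),
        (ENNReal.ofReal (gv z) + ENNReal.ofReal (gv z.swap)) ≤
      ∫⁻ z, ENNReal.ofReal (gagl k m σ p u α β z) := by
    intro n
    refine (trunc_ineq hk hσ hp hγ hαβ (hTm n) (fun r hr => hr.1.1) (fun r hr => hr.1.2) hum hv hH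
      (truncS_finite n)).trans ?_
    have hsub : pairSet k m (T n) ⊆ pairSet k m (fullS γ) := fun z hz => hz.1
    rw [lintegral_symm_union (measurableSet_pairSet (hTm n))
      (pairSet_disjoint.mono hsub (preimage_mono hsub)) hgu]
    exact setLIntegral_le_lintegral _ _
  have e1 : ∫⁻ z, ENNReal.ofReal (gv z) = ⨆ n, ∫⁻ z in pairSet k m (T n),
        (ENNReal.ofReal (gv z) + ENNReal.ofReal (gv z.swap)) := by
    rw [← setLIntegral_iUnion_of_directed _ hmono.directed_le, hUp,
      lintegral_symm_union (measurableSet_pairSet (measurableSet_fullS γ)) pairSet_disjoint hgv,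
      setLIntegral_congr (ae_pairSet hk h0), setLIntegral_univ]
  have e2 : CS k (Ioo 0 1) σ p γ α β = ⨆ n, CS k (T n) σ p γ α β := by
    rw [← CS_fullS hγ h0, ← hU]
    exact setLIntegral_iUnion_of_directed _ (truncS_mono k σ p γ α β).directed_le
  have t1 := tendsto_atTop_iSup (f := fun n => ∫⁻ z in pairSet k m (T n),
        (ENNReal.ofReal (gv z) + ENNReal.ofReal (gv z.swap)))
        fun n n' h => lintegral_mono_set (hmono h)
  have t2 := tendsto_atTop_iSup (f := fun n => CS k (T n) σ p γ α β)
        fun n n' h => lintegral_mono_set (truncS_mono k σ p γ α β h)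
  rw [← e1] at t1
  rw [← e2] at t2
  refine le_of_tendsto' ((ENNReal.Tendsto.mul_const (ENNReal.Tendsto.const_mul t2
    (Or.inr ENNReal.ofReal_ne_top)) (Or.inr hH)).add (ENNReal.Tendsto.const_mul t1
    (Or.inr ENNReal.ofReal_ne_top))) step

end

/-! ### Local integrability of the weights -/

lemma lintegral_rpow_Ioc {a : ℝ} (ha : -1 < a) :
    ∫⁻ r in Ioc (0:ℝ) 1, ENNReal.ofReal (r ^ a) ≠ ⊤ := by
  have h : IntegrableOn (fun r : ℝ => r ^ a) (Ioc 0 1) :=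
    (intervalIntegrable_iff_integrableOn_Ioc_of_le zero_le_one).1
      (intervalIntegral.intervalIntegrable_rpow' ha)
  exact h.lintegral_lt_top.ne

lemma lintegral_rpow_Ioi {a : ℝ} (ha : a < -1) :
    ∫⁻ r in Ioi (1:ℝ), ENNReal.ofReal (r ^ a) ≠ ⊤ :=
  (integrableOn_Ioi_rpow_of_lt ha one_pos).lintegral_lt_top.ne

/-- `|y|^δ` is integrable over the unit ball of `ℝ^k` for `δ > -k`. -/
lemma lintegral_ball_rpow {k : ℕ} (hk : 1 ≤ k) {δ : ℝ} (hδ : -(k:ℝ) < δ) :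
    ∫⁻ y : EE k, (Iic (1:ℝ)).indicator (fun t => ENNReal.ofReal (t ^ δ)) ‖y‖ ≠ ⊤ := by
  have hm : Measurable ((Iic (1:ℝ)).indicator (fun t : ℝ => ENNReal.ofReal (t ^ δ))) :=
    (measurable_ofReal_rpow measurable_id δ).indicator measurableSet_Iic
  rw [lintegral_radial hk hm]
  refine ENNReal.mul_ne_top ENNReal.ofReal_ne_top ?_
  have hle : ∫⁻ r in Ioi (0:ℝ), ENNReal.ofReal (r ^ (k - 1)) *
      (Iic (1:ℝ)).indicator (fun t => ENNReal.ofReal (t ^ δ)) r ≤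
      ∫⁻ r in Ioc (0:ℝ) 1, ENNReal.ofReal (r ^ ((k:ℝ) - 1 + δ)) := by
    rw [← lintegral_indicator measurableSet_Ioi, ← lintegral_indicator measurableSet_Ioc]
    refine lintegral_mono fun r => ?_
    by_cases h0 : 0 < r
    · by_cases h1 : r ≤ 1
      · rw [indicator_of_mem (show r ∈ Ioi (0:ℝ) from h0),
          indicator_of_mem (show r ∈ Ioc (0:ℝ) 1 from ⟨h0, h1⟩),
          indicator_of_mem (show r ∈ Iic (1:ℝ) from h1), ← ENNReal.ofReal_mul (by positivity),
          Real.rpow_add h0, ← Real.rpow_natCast, Nat.cast_sub hk, Nat.cast_one]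
      · simp [h1]
    · simp [h0]
  exact ne_top_of_le_ne_top (lintegral_rpow_Ioc (by linarith)) hle

section
variable {k m : ℕ}

/-- Local integrability of `|x_k|^δ` for `-k < δ ≤ 0`, uniformly under translations. -/
lemma local_unif (hk : 1 ≤ k) {δ : ℝ} (hδ : -(k:ℝ) < δ) (hδ0 : δ ≤ 0) (R : ℝ) :
    ∃ M : ENNReal, M ≠ ⊤ ∧ ∀ h : EE (k + m), ∫⁻ x in Metric.closedBall (0 : EE (k + m)) R,
      ENNReal.ofReal (‖fstE k m (x + h)‖ ^ δ) ≤ M := by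
  set I := ∫⁻ y : EE k, (Iic (1:ℝ)).indicator (fun t => ENNReal.ofReal (t ^ δ)) ‖y‖ with hI
  have hm : Measurable ((Iic (1:ℝ)).indicator (fun t : ℝ => ENNReal.ofReal (t ^ δ))) :=
    (measurable_ofReal_rpow measurable_id δ).indicator measurableSet_Iic
  refine ⟨volume (Metric.closedBall (0 : EE (k + m)) R) +
    volume (Metric.closedBall (0 : EE m) R) * I, ?_, fun h => ?_⟩
  · exact ENNReal.add_ne_top.2 ⟨measure_closedBall_lt_top.ne,
      ENNReal.mul_ne_top measure_closedBall_lt_top.ne (lintegral_ball_rpow hk hδ)⟩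
  have hpt : ∀ x : EE (k + m), ENNReal.ofReal (‖fstE k m (x + h)‖ ^ δ) ≤
      1 + (Iic (1:ℝ)).indicator (fun t => ENNReal.ofReal (t ^ δ)) ‖fstE k m (x + h)‖ := by
    intro x
    by_cases h1 : ‖fstE k m (x + h)‖ ≤ 1
    · rw [indicator_of_mem (show _ ∈ Iic (1:ℝ) from h1)]
      exact le_add_self
    · refine le_add_right ?_
      rw [← ENNReal.ofReal_one]
      exact ENNReal.ofReal_le_ofReal (Real.rpow_le_one_of_one_le_of_nonpos (not_le.1 h1).le hδ0)
  refine (lintegral_mono hpt).trans ?_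
  rw [lintegral_add_left measurable_const, setLIntegral_const, one_mul]
  gcongr
  rw [← lintegral_indicator Metric.isClosed_closedBall.measurableSet]
  have hb : ∀ x : EE (k + m), (Metric.closedBall (0 : EE (k + m)) R).indicator (fun x =>
      (Iic (1:ℝ)).indicator (fun t => ENNReal.ofReal (t ^ δ)) ‖fstE k m (x + h)‖) x ≤
      (fun (y : EE k) (z : EE m) =>
        (Iic (1:ℝ)).indicator (fun t => ENNReal.ofReal (t ^ δ)) ‖y + fstE k m h‖ *
        (Metric.closedBall (0 : EE m) R).indicator (fun _ => (1 : ENNReal)) z)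
        (fstE k m x) (sndE k m x) := by
    intro x
    by_cases hx : x ∈ Metric.closedBall (0 : EE (k + m)) R
    · have h2 : sndE k m x ∈ Metric.closedBall (0 : EE m) R := by
        rw [mem_closedBall_zero_iff] at hx ⊢
        refine le_trans ?_ hx
        refine (sq_le_sq₀ (norm_nonneg _) (norm_nonneg _)).1 ?_
        rw [norm_split k m x]
        nlinarith [sq_nonneg ‖fstE k m x‖]
      rw [indicator_of_mem hx]
      simp only [indicator_of_mem h2, mul_one, fstE_add]
      exact le_rfl
    · rw [indicator_of_notMem hx]
      exact bot_le
  refine (lintegral_mono hb).trans ?_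
  have hF : Measurable (Function.uncurry fun (y : EE k) (z : EE m) =>
        (Iic (1:ℝ)).indicator (fun t => ENNReal.ofReal (t ^ δ)) ‖y + fstE k m h‖ *
        (Metric.closedBall (0 : EE m) R).indicator (fun _ => (1 : ENNReal)) z) := by
    refine Measurable.mul (hm.comp (by fun_prop)) ?_
    exact (measurable_const.indicator Metric.isClosed_closedBall.measurableSet).comp measurable_snd
  rw [lintegral_split k m hF]
  have h3 : ∀ y : EE k, ∫⁻ z : EE m,
      (Iic (1:ℝ)).indicator (fun t => ENNReal.ofReal (t ^ δ)) ‖y + fstE k m h‖ *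
        (Metric.closedBall (0 : EE m) R).indicator (fun _ => (1 : ENNReal)) z =
      (Iic (1:ℝ)).indicator (fun t => ENNReal.ofReal (t ^ δ)) ‖y + fstE k m h‖ *
        volume (Metric.closedBall (0 : EE m) R) := by
    intro y
    rw [lintegral_const_mul _ (measurable_const.indicator
      Metric.isClosed_closedBall.measurableSet), lintegral_indicator_const
      Metric.isClosed_closedBall.measurableSet, one_mul]
  simp_rw [h3]
  rw [lintegral_mul_const' _ _ measure_closedBall_lt_top.ne, mul_comm]
  gcongr
  exact (lintegral_add_right_eq_self (μ := (volume : Measure (EE k)))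
    (fun y => (Iic (1:ℝ)).indicator (fun t => ENNReal.ofReal (t ^ δ)) ‖y‖) (fstE k m h)).le

lemma fstE_norm_le (x : EE (k + m)) : ‖fstE k m x‖ ≤ ‖x‖ := by
  refine (sq_le_sq₀ (norm_nonneg _) (norm_nonneg _)).1 ?_
  rw [norm_split k m x]
  nlinarith [sq_nonneg ‖sndE k m x‖]

/-- Local integrability of `|x_k|^δ` for `δ > -k`. -/
lemma local_int (hk : 1 ≤ k) {δ : ℝ} (hδ : -(k:ℝ) < δ) (R : ℝ) :
    ∫⁻ x in Metric.closedBall (0 : EE (k + m)) R, ENNReal.ofReal (‖fstE k m x‖ ^ δ) ≠ ⊤ := by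
  rcases le_or_gt δ 0 with h | h
  · obtain ⟨M, hM, hb⟩ := local_unif (m := m) hk hδ h R
    have := hb 0
    simp only [add_zero] at this
    exact ne_top_of_le_ne_top hM this
  · have : ∫⁻ x in Metric.closedBall (0 : EE (k + m)) R, ENNReal.ofReal (‖fstE k m x‖ ^ δ) ≤
        ∫⁻ x in Metric.closedBall (0 : EE (k + m)) R, ENNReal.ofReal (R ^ δ) := by
      refine setLIntegral_mono' Metric.isClosed_closedBall.measurableSet fun x hx => ?_
      rw [mem_closedBall_zero_iff] at hx
      exact ENNReal.ofReal_le_ofReal (Real.rpow_le_rpow (norm_nonneg _)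
        ((fstE_norm_le x).trans hx) h.le)
    refine ne_top_of_le_ne_top ?_ this
    rw [setLIntegral_const]
    exact ENNReal.mul_ne_top ENNReal.ofReal_ne_top measure_closedBall_lt_top.ne

/-- A bound for the product of the weights at `x` and `y = x + h` in terms of locally integrable
weights of one point and growth in `t = |h|` of order `b₀ < σ`; here `a = |x_k|`, `b = |y_k|`. -/
lemma weight_bound {σ α β : ℝ} (hk : 1 ≤ k) (hσ : 0 < σ) (hα : -(k:ℝ) < α) (hβ : -(k:ℝ) < β)
    (hαβ : -(k:ℝ) < α + β) (hβσ : β < σ) {R : ℝ} (hR : 0 ≤ R) :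
    ∃ C b₀ δ₁ δ₂ δ₃ : ℝ, 0 ≤ C ∧ 0 ≤ b₀ ∧ b₀ < σ ∧ -(k:ℝ) < δ₁ ∧ -(k:ℝ) < δ₂ ∧ -(k:ℝ) < δ₃ ∧
      δ₃ ≤ 0 ∧ ∀ a b t : ℝ, 0 ≤ a → a ≤ R → 0 ≤ b → 0 ≤ t → b ≤ a + t →
        a ^ α * b ^ β ≤ C * (1 + t ^ b₀) * (a ^ δ₁ + a ^ δ₂ + b ^ δ₃) := by
  have hk0 : -(k:ℝ) < 0 := by
    have : (1:ℝ) ≤ k := by exact_mod_cast hk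
    linarith
  rcases le_or_gt 0 β with hb | hb
  · refine ⟨2 ^ β, β, α + β, α, 0, by positivity, hb, hβσ, hαβ, hα, hk0, le_rfl, ?_⟩
    intro a b t ha haR hb0 ht hbt
    have h1 : b ^ β ≤ 2 ^ β * (a ^ β + t ^ β) := by
      calc b ^ β ≤ (2 * max a t) ^ β := by
            refine Real.rpow_le_rpow hb0 ?_ hb
            linarith [le_max_left a t, le_max_right a t]
        _ = 2 ^ β * (max a t) ^ β := Real.mul_rpow (by norm_num) (by positivity)
        _ ≤ 2 ^ β * (a ^ β + t ^ β) := by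
            gcongr
            rcases max_choice a t with h | h <;> rw [h]
            · linarith [Real.rpow_nonneg ht β]
            · linarith [Real.rpow_nonneg ha β]
    have h2 := Real.le_rpow_add ha α β
    calc a ^ α * b ^ β ≤ a ^ α * (2 ^ β * (a ^ β + t ^ β)) := by gcongr
      _ = 2 ^ β * (a ^ α * a ^ β + t ^ β * a ^ α) := by ring
      _ ≤ 2 ^ β * (a ^ (α + β) + t ^ β * a ^ α) := by gcongr
      _ ≤ 2 ^ β * ((1 + t ^ β) * (a ^ (α + β) + a ^ α + b ^ (0:ℝ))) := by
          gcongr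
          have q1 : 0 ≤ t ^ β := by positivity
          have q2 : 0 ≤ a ^ (α + β) := by positivity
          have q3 : 0 ≤ a ^ α := by positivity
          rw [Real.rpow_zero]
          nlinarith [mul_nonneg q1 q2]
      _ = _ := by ring
  rcases le_or_gt 0 α with ha' | ha'
  · refine ⟨R ^ α, 0, 0, 0, β, by positivity, le_rfl, hσ, hk0, hk0, hβ, hb.le, ?_⟩
    intro a b t ha haR hb0 ht hbt
    have h1 : a ^ α ≤ R ^ α := Real.rpow_le_rpow ha haR ha'
    simp only [Real.rpow_zero]
    have q1 : 0 ≤ R ^ α := by positivity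
    have q2 : 0 ≤ b ^ β := by positivity
    calc a ^ α * b ^ β ≤ R ^ α * b ^ β := by gcongr
      _ ≤ R ^ α * (1 + 1) * (1 + 1 + b ^ β) := by nlinarith [mul_nonneg q1 q2]
  · refine ⟨1, 0, α + β, α + β, α + β, by norm_num, le_rfl, hσ, hαβ, hαβ, hαβ, by linarith, ?_⟩
    intro a b t ha haR hb0 ht hbt
    have q1 : 0 ≤ a ^ (α + β) := by positivity
    have q2 : 0 ≤ b ^ (α + β) := by positivity
    suffices h : a ^ α * b ^ β ≤ a ^ (α + β) + b ^ (α + β) by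
      simp only [Real.rpow_zero]; linarith
    rcases ha.eq_or_lt with h0 | h0
    · rw [← h0, Real.zero_rpow ha'.ne, zero_mul]; rw [← h0] at q1; linarith
    rcases hb0.eq_or_lt with h0' | h0'
    · rw [← h0', Real.zero_rpow hb.ne, mul_zero]; rw [← h0'] at q2; linarith
    rcases le_total a b with hab | hab
    · have : b ^ β ≤ a ^ β := Real.rpow_le_rpow_of_nonpos h0 hab hb.le
      calc a ^ α * b ^ β ≤ a ^ α * a ^ β := by gcongr
        _ = a ^ (α + β) := (Real.rpow_add h0 _ _).symm
        _ ≤ _ := by linarith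
    · have : a ^ α ≤ b ^ α := Real.rpow_le_rpow_of_nonpos h0' hab ha'.le
      calc a ^ α * b ^ β ≤ b ^ α * b ^ β := by gcongr
        _ = b ^ (α + β) := (Real.rpow_add h0' _ _).symm
        _ ≤ _ := by linarith

/-- Integrability of the kernel truncated by `min(1,|h|)^p`, with a moderately growing factor. -/
lemma kernel_int {n : ℕ} (hn : 1 ≤ n) {σ p b : ℝ} (hpσ : σ < p) (hb : 0 ≤ b) (hbσ : b < σ) :
    ∫⁻ h : EE n, ENNReal.ofReal ((min 1 ‖h‖) ^ p * ‖h‖ ^ (-(n:ℝ) - σ) * (1 + ‖h‖ ^ b)) ≠ ⊤ := by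
  have hm : Measurable fun r : ℝ =>
      ENNReal.ofReal ((min 1 r) ^ p * r ^ (-(n:ℝ) - σ) * (1 + r ^ b)) := by
    refine Measurable.ennreal_ofReal (Measurable.mul (Measurable.mul ?_ ?_) ?_)
    · exact (measurable_const.min measurable_id).pow_const _
    · exact measurable_id.pow_const _
    · exact (measurable_id.pow_const _).const_add _
  rw [lintegral_radial hn hm]
  refine ENNReal.mul_ne_top ENNReal.ofReal_ne_top ?_
  rw [← Ioc_union_Ioi_eq_Ioi (zero_le_one (α := ℝ)), lintegral_union measurableSet_Ioi
    (Ioc_disjoint_Ioi le_rfl)]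
  have hnat : ∀ r : ℝ, r ^ (n - 1) = r ^ ((n:ℝ) - 1) := fun r => by
    rw [← Real.rpow_natCast, Nat.cast_sub hn, Nat.cast_one]
  refine ENNReal.add_ne_top.2 ⟨?_, ?_⟩
  · refine ne_top_of_le_ne_top (ENNReal.mul_ne_top (ENNReal.ofReal_ne_top (r := 2))
      (lintegral_rpow_Ioc (a := p - 1 - σ) (by linarith))) ?_
    rw [← lintegral_const_mul' _ _ ENNReal.ofReal_ne_top]
    refine setLIntegral_mono' measurableSet_Ioc fun r hr => ?_
    have h0 := hr.1
    rw [← ENNReal.ofReal_mul (by positivity), ← ENNReal.ofReal_mul (by positivity)]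
    refine ENNReal.ofReal_le_ofReal ?_
    rw [min_eq_right hr.2, hnat, ← mul_assoc, ← mul_assoc, ← Real.rpow_add h0, ← Real.rpow_add h0,
      mul_comm]
    have : r ^ b ≤ 1 := Real.rpow_le_one h0.le hr.2 hb
    rw [show (n:ℝ) - 1 + p + (-(n:ℝ) - σ) = p - 1 - σ by ring]
    gcongr
    linarith
  · refine ne_top_of_le_ne_top (ENNReal.mul_ne_top (ENNReal.ofReal_ne_top (r := 2))
      (lintegral_rpow_Ioi (a := b - 1 - σ) (by linarith))) ?_
    rw [← lintegral_const_mul' _ _ ENNReal.ofReal_ne_top]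
    refine setLIntegral_mono' measurableSet_Ioi fun r hr => ?_
    have hr : 1 < r := hr
    have h0 : 0 < r := by linarith
    rw [← ENNReal.ofReal_mul (by positivity), ← ENNReal.ofReal_mul (by positivity)]
    refine ENNReal.ofReal_le_ofReal ?_
    have : 1 ≤ r ^ b := Real.one_le_rpow hr.le hb
    rw [min_eq_left hr.le, hnat, Real.one_rpow, one_mul, ← mul_assoc, ← Real.rpow_add h0,
      show b - 1 - σ = (n:ℝ) - 1 + (-(n:ℝ) - σ) + b by ring, Real.rpow_add h0 _ b]
    have : 0 ≤ r ^ ((n:ℝ) - 1 + (-(n:ℝ) - σ)) := by positivity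
    nlinarith

end

/-! ### Finiteness of the energies -/

section
variable {k m : ℕ} {σ p α β R : ℝ}

/-- The density majorizing the weighted Gagliardo energy of a compactly supported Lipschitz
function, localized to `x` in a ball. -/
def majD (k m : ℕ) (σ p R α β : ℝ) (z : EE (k + m) × EE (k + m)) : ENNReal :=
  (Metric.closedBall (0 : EE (k + m)) R).indicator 1 z.1 *
    ENNReal.ofReal ((min 1 ‖z.1 - z.2‖) ^ p * ‖z.1 - z.2‖ ^ (-((k + m : ℕ) : ℝ) - σ) *
      ‖fstE k m z.1‖ ^ α * ‖fstE k m z.2‖ ^ β)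

lemma measurable_majD (k m : ℕ) (σ p R α β : ℝ) : Measurable (majD k m σ p R α β) := by
  have h1 : Measurable fun z : EE (k + m) × EE (k + m) => ‖fstE k m z.1‖ :=
    (measurable_rho k m).comp measurable_fst
  have h2 : Measurable fun z : EE (k + m) × EE (k + m) => ‖fstE k m z.2‖ :=
    (measurable_rho k m).comp measurable_snd
  refine Measurable.mul ?_ (Measurable.ennreal_ofReal (Measurable.mul (Measurable.mul
    (Measurable.mul ?_ ?_) (h1.pow_const _)) (h2.pow_const _)))
  · exact (measurable_one.indicator Metric.isClosed_closedBall.measurableSet).comp measurable_fst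
  · exact Measurable.pow_const (by fun_prop) _
  · exact Measurable.pow_const (by fun_prop) _

/-- Substituting `y = x + h`, the weights are integrated over `x` first, uniformly in `h`. -/
lemma majD_int (hk : 1 ≤ k) (hσ : 0 < σ) (hpσ : σ < p) (hα : -(k:ℝ) < α) (hβ : -(k:ℝ) < β)
    (hαβ : -(k:ℝ) < α + β) (hβσ : β < σ) (hR : 0 ≤ R) :
    ∫⁻ z, majD k m σ p R α β z ≠ ⊤ := by
  obtain ⟨C, b₀, δ₁, δ₂, δ₃, hC, hb0, hb0σ, hδ1, hδ2, hδ3, hδ3', hW⟩ :=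
    weight_bound hk hσ hα hβ hαβ hβσ hR
  obtain ⟨M, hM, hMb⟩ := local_unif (m := m) hk hδ3 hδ3' R
  have hm := measurable_majD k m σ p R α β
  set B := Metric.closedBall (0 : EE (k + m)) R with hB
  have hBm : MeasurableSet B := Metric.isClosed_closedBall.measurableSet
  set I₁ := ∫⁻ x in B, ENNReal.ofReal (‖fstE k m x‖ ^ δ₁)
  set I₂ := ∫⁻ x in B, ENNReal.ofReal (‖fstE k m x‖ ^ δ₂)
  have hI1 : I₁ ≠ ⊤ := local_int hk hδ1 R
  have hI2 : I₂ ≠ ⊤ := local_int hk hδ2 R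
  have e1 : ∫⁻ z, majD k m σ p R α β z = ∫⁻ h, ∫⁻ x, majD k m σ p R α β (x, x + h) := by
    rw [Measure.volume_eq_prod, lintegral_prod _ hm.aemeasurable]
    have : ∀ x : EE (k + m), ∫⁻ y, majD k m σ p R α β (x, y) =
        ∫⁻ h, majD k m σ p R α β (x, x + h) := fun x =>
      (lintegral_add_left_eq_self (fun y => majD k m σ p R α β (x, y)) x).symm
    simp_rw [this]
    refine lintegral_lintegral_swap (Measurable.aemeasurable ?_)
    exact hm.comp (measurable_fst.prodMk (measurable_fst.add measurable_snd))
  set W : EE (k + m) → ENNReal := fun h => ENNReal.ofReal ((min 1 ‖h‖) ^ p *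
    ‖h‖ ^ (-((k + m : ℕ) : ℝ) - σ) * (1 + ‖h‖ ^ b₀)) with hWd
  have e2 : ∀ h, ∫⁻ x, majD k m σ p R α β (x, x + h) ≤
      W h * (ENNReal.ofReal C * (I₁ + I₂ + M)) := by
    intro h
    have hpt : ∀ x, majD k m σ p R α β (x, x + h) ≤ B.indicator (fun x => W h * (ENNReal.ofReal C *
        (ENNReal.ofReal (‖fstE k m x‖ ^ δ₁) + ENNReal.ofReal (‖fstE k m x‖ ^ δ₂) +
          ENNReal.ofReal (‖fstE k m (x + h)‖ ^ δ₃)))) x := by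
      intro x
      by_cases hx : x ∈ B
      · simp only [majD, ← hB, indicator_of_mem hx, Pi.one_apply, one_mul, hWd, sub_add_cancel_left,
          norm_neg]
        rw [← ENNReal.ofReal_add (by positivity) (by positivity),
          ← ENNReal.ofReal_add (by positivity) (by positivity), ← ENNReal.ofReal_mul hC,
          ← ENNReal.ofReal_mul (by positivity)]
        refine ENNReal.ofReal_le_ofReal ?_
        have hx' : ‖x‖ ≤ R := by rwa [hB, mem_closedBall_zero_iff] at hx
        have hbt : ‖fstE k m (x + h)‖ ≤ ‖fstE k m x‖ + ‖h‖ := by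
          rw [fstE_add]
          exact (norm_add_le _ _).trans (by gcongr; exact fstE_norm_le h)
        have key := hW _ _ _ (norm_nonneg (fstE k m x)) ((fstE_norm_le x).trans hx')
          (norm_nonneg (fstE k m (x + h))) (norm_nonneg h) hbt
        have hN : 0 ≤ (min 1 ‖h‖) ^ p * ‖h‖ ^ (-((k + m : ℕ) : ℝ) - σ) := by positivity
        have := mul_le_mul_of_nonneg_left key hN
        linarith
      · simp [majD, ← hB, hx]
    refine (lintegral_mono hpt).trans ?_
    rw [lintegral_indicator hBm, lintegral_const_mul' _ _ ENNReal.ofReal_ne_top,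
      lintegral_const_mul' _ _ ENNReal.ofReal_ne_top, lintegral_add_left, lintegral_add_left]
    · gcongr
      exact hMb h
    · exact measurable_ofReal_rpow (measurable_rho k m) _
    · exact (measurable_ofReal_rpow (measurable_rho k m) _).add
        (measurable_ofReal_rpow (measurable_rho k m) _)
  rw [e1]
  have hfin : ENNReal.ofReal C * (I₁ + I₂ + M) ≠ ⊤ := ENNReal.mul_ne_top ENNReal.ofReal_ne_top
    (ENNReal.add_ne_top.2 ⟨ENNReal.add_ne_top.2 ⟨hI1, hI2⟩, hM⟩)
  refine ne_top_of_le_ne_top ?_ (lintegral_mono e2)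
  rw [lintegral_mul_const' _ _ hfin]
  exact ENNReal.mul_ne_top (kernel_int (by omega) hpσ hb0 hb0σ) hfin

/-- The weighted Gagliardo energy of a `C^1` function with compact support is finite. -/
lemma gagl_int (hk : 1 ≤ k) (hσ : 0 < σ) (hpσ : σ < p) (hα : -(k:ℝ) < α) (hβ : -(k:ℝ) < β)
    (hαβ : -(k:ℝ) < α + β) (hασ : α < σ) (hβσ : β < σ) {u : EE (k + m) → ℝ}
    (hu : ContDiff ℝ 1 u) (hs : HasCompactSupport u) :
    ∫⁻ z, ENNReal.ofReal (gagl k m σ p u α β z) ≠ ⊤ := by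
  obtain ⟨L, hL⟩ := hu.lipschitzWith_of_hasCompactSupport hs one_ne_zero
  obtain ⟨Cb, hCb⟩ := hs.exists_bound_of_continuous hu.continuous
  obtain ⟨R₀, hR₀⟩ := hs.isCompact.isBounded.subset_closedBall (0 : EE (k + m))
  set R := max R₀ 0 with hR
  have hsub : tsupport u ⊆ Metric.closedBall 0 R :=
    hR₀.trans (Metric.closedBall_subset_closedBall (le_max_left _ _))
  set K : ℝ := max L (2 * Cb) with hK
  have hK0 : 0 ≤ K := le_trans L.2 (le_max_left _ _)
  have hp0 : 0 < p := hσ.trans hpσ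
  have hdiff : ∀ x y, |u x - u y| ^ p ≤ K ^ p * (min 1 ‖x - y‖) ^ p := by
    intro x y
    rw [← Real.mul_rpow hK0 (by positivity)]
    refine Real.rpow_le_rpow (abs_nonneg _) ?_ hp0.le
    rcases min_choice 1 ‖x - y‖ with h | h <;> rw [h]
    · have h1 := hCb x
      have h2 := hCb y
      rw [Real.norm_eq_abs] at h1 h2
      calc |u x - u y| ≤ |u x| + |u y| := abs_sub _ _
        _ ≤ 2 * Cb := by linarith
        _ ≤ K * 1 := by rw [mul_one]; exact le_max_right _ _
    · have := hL.dist_le_mul x y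
      rw [Real.dist_eq, dist_eq_norm] at this
      exact this.trans (by gcongr; exact le_max_left _ _)
  have hpt : ∀ z, ENNReal.ofReal (gagl k m σ p u α β z) ≤ ENNReal.ofReal (K ^ p) *
      (majD k m σ p R α β z + majD k m σ p R β α z.swap) := by
    rintro ⟨x, y⟩
    have hreal : gagl k m σ p u α β (x, y) ≤ K ^ p * ((min 1 ‖x - y‖) ^ p *
        ‖x - y‖ ^ (-((k + m : ℕ) : ℝ) - σ) * ‖fstE k m x‖ ^ α * ‖fstE k m y‖ ^ β) := by
      simp only [gagl, ← mul_assoc]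
      gcongr
      exact hdiff x y
    by_cases hx : x ∈ Metric.closedBall (0 : EE (k + m)) R
    · refine (ENNReal.ofReal_le_ofReal hreal).trans ?_
      rw [ENNReal.ofReal_mul (by positivity)]
      gcongr
      refine le_add_right ?_
      simp only [majD, indicator_of_mem hx, Pi.one_apply, one_mul]
      exact le_rfl
    by_cases hy : y ∈ Metric.closedBall (0 : EE (k + m)) R
    · refine (ENNReal.ofReal_le_ofReal hreal).trans ?_
      rw [ENNReal.ofReal_mul (by positivity)]
      gcongr
      refine le_add_left ?_
      simp only [majD, Prod.swap_prod_mk, indicator_of_mem hy, Pi.one_apply, one_mul,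
        norm_sub_rev y x]
      exact ENNReal.ofReal_le_ofReal (le_of_eq (by ring))
    · have h1 : u x = 0 := image_eq_zero_of_notMem_tsupport fun h => hx (hsub h)
      have h2 : u y = 0 := image_eq_zero_of_notMem_tsupport fun h => hy (hsub h)
      simp [gagl, h1, h2, Real.zero_rpow hp0.ne']
  refine ne_top_of_le_ne_top ?_ (lintegral_mono hpt)
  rw [lintegral_const_mul' _ _ ENNReal.ofReal_ne_top,
    lintegral_add_left (measurable_majD k m σ p R α β)]
  have hsw : ∫⁻ z : EE (k + m) × EE (k + m), majD k m σ p R β α z.swap =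
      ∫⁻ z, majD k m σ p R β α z :=
    (Measure.measurePreserving_swap (μ := (volume : Measure (EE (k + m))))
      (ν := (volume : Measure (EE (k + m))))).lintegral_comp (measurable_majD k m σ p R β α)
  rw [hsw]
  exact ENNReal.mul_ne_top ENNReal.ofReal_ne_top (ENNReal.add_ne_top.2
    ⟨majD_int hk hσ hpσ hα hβ hαβ hβσ (le_max_right _ _),
      majD_int hk hσ hpσ hβ hα (by linarith) hασ (le_max_right _ _)⟩)

/-- The Hardy integral is finite, either because the weight is locally integrable or because
`u` vanishes near the singular set. -/
lemma hardy_int (hk : 1 ≤ k) (hp : 0 < p) {δ : ℝ} (hδ0 : δ < 0) {u : EE (k + m) → ℝ}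
    (hu : Continuous u) (hs : HasCompactSupport u)
    (hcase : -(k:ℝ) < δ ∨ ∀ x, ‖fstE k m x‖ = 0 → x ∉ tsupport u) :
    ∫⁻ x, hardyD k m p u δ x ≠ ⊤ := by
  obtain ⟨Cb, hCb⟩ := hs.exists_bound_of_continuous hu
  have hCb0 : 0 ≤ Cb := (norm_nonneg _).trans (hCb 0)
  rcases hcase with h | h
  · obtain ⟨R, hR⟩ := hs.isCompact.isBounded.subset_closedBall (0 : EE (k + m))
    have hpt : ∀ x, hardyD k m p u δ x ≤ (Metric.closedBall (0 : EE (k + m)) R).indicator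
        (fun x => ENNReal.ofReal (Cb ^ p) * ENNReal.ofReal (‖fstE k m x‖ ^ δ)) x := by
      intro x
      by_cases hx : x ∈ Metric.closedBall (0 : EE (k + m)) R
      · rw [indicator_of_mem hx, ← ENNReal.ofReal_mul (by positivity)]
        refine ENNReal.ofReal_le_ofReal ?_
        gcongr
        exact hCb x
      · have : u x = 0 := image_eq_zero_of_notMem_tsupport fun h => hx (hR h)
        simp [hardyD, this, Real.zero_rpow hp.ne']
    refine ne_top_of_le_ne_top ?_ (lintegral_mono hpt)
    rw [lintegral_indicator Metric.isClosed_closedBall.measurableSet,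
      lintegral_const_mul' _ _ ENNReal.ofReal_ne_top]
    exact ENNReal.mul_ne_top ENNReal.ofReal_ne_top (local_int hk h R)
  · have hcont : Continuous fun x : EE (k + m) => ‖fstE k m x‖ := by
      have : Continuous (fstE k m) := by unfold fstE; fun_prop
      exact this.norm
    obtain ⟨ε, hε, hεb⟩ : ∃ ε > 0, ∀ x ∈ tsupport u, ε ≤ ‖fstE k m x‖ := by
      rcases (tsupport u).eq_empty_or_nonempty with he | hne
      · exact ⟨1, one_pos, fun x hx => by rw [he] at hx; exact absurd hx (notMem_empty x)⟩
      · obtain ⟨x₀, hx₀, hmin⟩ := hs.isCompact.exists_isMinOn hne hcont.continuousOn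
        exact ⟨‖fstE k m x₀‖, lt_of_le_of_ne (norm_nonneg _) fun h0 => h x₀ h0.symm hx₀,
          fun x hx => hmin hx⟩
    have hpt : ∀ x, hardyD k m p u δ x ≤
        (tsupport u).indicator (fun _ => ENNReal.ofReal (Cb ^ p * ε ^ δ)) x := by
      intro x
      by_cases hx : x ∈ tsupport u
      · rw [indicator_of_mem hx]
        refine ENNReal.ofReal_le_ofReal ?_
        have := Real.rpow_le_rpow_of_nonpos hε (hεb x hx) hδ0.le
        gcongr
        exact hCb x
      · have : u x = 0 := image_eq_zero_of_notMem_tsupport hx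
        simp [hardyD, this, Real.zero_rpow hp.ne']
    refine ne_top_of_le_ne_top ?_ (lintegral_mono hpt)
    rw [lintegral_indicator_const (isClosed_tsupport u).measurableSet]
    exact ENNReal.mul_ne_top ENNReal.ofReal_ne_top hs.isCompact.measure_lt_top.ne

/-- A double Bochner integral of a nonnegative function equals its lower Lebesgue integral, when
the latter is finite. -/
lemma double_integral_eq {f : EE (k + m) × EE (k + m) → ℝ} (hf : Measurable f) (h0 : ∀ z, 0 ≤ f z)
    (hfin : ∫⁻ z, ENNReal.ofReal (f z) ≠ ⊤) :
    ENNReal.ofReal (∫ x, ∫ y, f (x, y)) = ∫⁻ z, ENNReal.ofReal (f z) := by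
  have hint : Integrable f ((volume : Measure (EE (k + m))).prod volume) :=
    ⟨hf.aestronglyMeasurable, by
      rw [hasFiniteIntegral_iff_ofReal (Eventually.of_forall h0)]; exact hfin.lt_top⟩
  rw [← integral_prod f hint]
  exact ofReal_integral_eq_lintegral_ofReal hint (Eventually.of_forall h0)

end

/-! ### The theorem -/

/-- **Sharp weighted fractional Hardy inequality with remainder, `p ≥ 2`** (Theorem 2). -/
theorem weighted_fractional_hardy_remainder_p_ge_two
    (d k : ℕ) (s p α β : ℝ)
    (hd : 1 ≤ d) (hp : 2 ≤ p) (hs : s ∈ Ioo (0 : ℝ) 1)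
    (hk : 1 ≤ k) (hkd : k ≤ d)
    (hα : α ∈ Ioo (-(k : ℝ)) (s * p)) (hβ : β ∈ Ioo (-(k : ℝ)) (s * p))
    (hαβ : α + β ∈ Ioo (-(k : ℝ)) (s * p))
    (u : EuclideanSpace ℝ (Fin d) → ℝ)
    (hu : ContDiff ℝ 1 u) (husupp : HasCompactSupport u)
    (hcase : s * p < k + α + β ∨
      (k + α + β < s * p ∧ ∀ x, pnorm d k x = 0 → x ∉ tsupport u))
    (v : EuclideanSpace ℝ (Fin d) → ℝ)
    (hv : ∀ x, v x = pnorm d k x ^ (((k : ℝ) + α + β - s * p) / p) * u x) :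
    (∫ x, ∫ y, |u x - u y| ^ p * ‖x - y‖ ^ (-(d : ℝ) - s * p)
        * pnorm d k x ^ α * pnorm d k y ^ β)
      - CC d k s p α β * ∫ x, |u x| ^ p * pnorm d k x ^ (α + β - s * p) ≥
      cRem p * ∫ x, ∫ y, |v x - v y| ^ p * ‖x - y‖ ^ (-(d : ℝ) - s * p)
        * pnorm d k x ^ (-(((k : ℝ) - α + β - s * p) / 2))
        * pnorm d k y ^ (-(((k : ℝ) + α - β - s * p) / 2)) := by
  obtain ⟨m, rfl⟩ := Nat.exists_eq_add_of_le hkd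
  obtain ⟨hs0, hs1⟩ := hs
  have hp0 : 0 < p := by linarith
  set σ := s * p with hσd
  have hσ : 0 < σ := by positivity
  have hσp : σ < p := by rw [hσd]; nlinarith
  set γ := ((k : ℝ) + α + β - σ) / p with hγd
  have hγ : γ * p = k + α + β - σ := by rw [hγd]; field_simp
  have hγ0 : γ ≠ 0 := by
    refine div_ne_zero ?_ hp0.ne'
    rcases hcase with h | ⟨h, -⟩
    · exact (by linarith : 0 < (k : ℝ) + α + β - σ).ne'
    · exact (by linarith : (k : ℝ) + α + β - σ < 0).ne
  simp only [pnorm_split] at hcase hv ⊢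
  have hum : Measurable u := hu.continuous.measurable
  have hvm : Measurable v := by
    rw [funext hv]; exact ((measurable_rho k m).pow_const _).mul hum
  have hH := hardy_int (m := m) hk hp0 (δ := α + β - σ) (by linarith [hαβ.2]) hu.continuous husupp
    (hcase.imp (fun h => by linarith) (fun h => h.2))
  have hL := gagl_int hk hσ hσp hα.1 hβ.1 hαβ.1 hα.2 hβ.2 hu husupp
  have main := lintegral_ineq hk hσ hp hγ hγ0 hαβ.2 hum hv hH
  have eL := double_integral_eq (measurable_gagl k m σ p hum α β) (gagl_nonneg k m σ p u α β) hL
  have eH : ENNReal.ofReal (∫ x, |u x| ^ p * ‖fstE k m x‖ ^ (α + β - σ)) =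
      ∫⁻ x, hardyD k m p u (α + β - σ) x := by
    have hnn : ∀ x, 0 ≤ |u x| ^ p * ‖fstE k m x‖ ^ (α + β - σ) := fun x => by positivity
    refine ofReal_integral_eq_lintegral_ofReal ⟨?_, ?_⟩ (Eventually.of_forall hnn)
    · exact (Measurable.mul (Measurable.pow_const (by fun_prop) _)
        ((measurable_rho k m).pow_const _)).aestronglyMeasurable
    · rw [hasFiniteIntegral_iff_ofReal (Eventually.of_forall hnn)]; exact hH.lt_top
  set Hr := ∫ x, |u x| ^ p * ‖fstE k m x‖ ^ (α + β - σ)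
  have hHr : 0 ≤ Hr := integral_nonneg fun x => by positivity
  -- the remainder term, whose energy is finite as soon as its coefficient does not vanish
  have eR : ENNReal.ofReal (cRem p * ∫ x, ∫ y,
      gagl k m σ p v (-((k - α + β - σ) / 2)) (-((k + α - β - σ) / 2)) (x, y)) =
      ENNReal.ofReal (cRem p) * ∫⁻ z,
        ENNReal.ofReal (gagl k m σ p v (-((k - α + β - σ) / 2)) (-((k + α - β - σ) / 2)) z) := by
    rcases (cRem_nonneg hp).eq_or_lt with hc | hc
    · simp [← hc]
    · rw [ENNReal.ofReal_mul hc.le]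
      congr 1
      refine double_integral_eq (measurable_gagl k m σ p hvm _ _) (gagl_nonneg k m σ p v _ _) ?_
      have h1 := ne_top_of_le_ne_top hL (le_add_self.trans main)
      intro htop
      rw [htop, ENNReal.mul_top (by simpa using hc)] at h1
      exact h1 rfl
  have hCC : CC (k + m) k s p α β = kap k m σ * C1 k s p α β := by
    rw [CC, kap, ← hσd]
    push_cast
    rw [add_sub_cancel_left]
  have eC : ENNReal.ofReal (CC (k + m) k s p α β * Hr) ≤
      ENNReal.ofReal (kap k m σ) * CS k (Ioo 0 1) σ p γ α β *
        ∫⁻ x, hardyD k m p u (α + β - σ) x := by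
    rw [ENNReal.ofReal_mul' hHr, hCC, ENNReal.ofReal_mul (kap_pos hσ).le, eH]
    gcongr
    exact C1_le_CS hk hγd
  have hfinal := (add_le_add eC eR.le).trans main
  rw [← eL] at hfinal
  have hLr : 0 ≤ ∫ x, ∫ y, gagl k m σ p u α β (x, y) :=
    integral_nonneg fun x => integral_nonneg fun y => gagl_nonneg _ _ _ _ _ _ _ _
  have h2 := (ENNReal.ofReal_le_ofReal_iff hLr).1 (ENNReal.ofReal_add_le.trans hfinal)
  simp only [gagl] at h2
  linarith
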